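/- arXiv:2405.12064 — 3 statements merged into one kernel-verified Lean document; each statement's English description precedes it below -/
import Mathlib

section
/- Let 𝕎 = ⋃_{i=0}^{J−1} 𝕎_i ⊆ [−1/2, 1/2]² be a cubic multiband set consisting of J ≥ 1 pairwise disjoint closed rectangles, with total Lebesgue measure ‖𝕎‖, and fix ε ∈ (0, 1/‖𝕎‖ − 1). Then there exist constants C̃₃ > 0, C̃₄ > 0 and integers M̃₂, Ñ₂ ≥ 1 (depending only on 𝕎 and ε) such that for all M ≥ M̃₂, N ≥ Ñ₂ and every index p with ⌈MN·‖𝕎‖·(1+ε)⌉ ≤ p ≤ MN−1, the p-th eigenvalue satisfies λ_{(M,N),𝕎}^{(p)} ≤ C̃₃·e^{−C̃₄·min(M,N)}. -/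
open MeasureTheory Matrix Real Set

/-- The 2-D prolate matrix `B_{(M,N),𝕎}`, indexed by pairs, with entries
`∫_𝕎 exp(2πi (f (m−p) + g (n−q))) df dg`. -/
noncomputable def prolate2D (M N : ℕ) (𝕎 : Set (ℝ × ℝ)) :
    Matrix (Fin M × Fin N) (Fin M × Fin N) ℂ :=
  fun i j => ∫ fg in 𝕎,
    Complex.exp (2 * (Real.pi : ℂ) * Complex.I *
      ((fg.1 : ℂ) * (((i.1 : ℕ) : ℂ) - ((j.1 : ℕ) : ℂ)) +
       (fg.2 : ℂ) * (((i.2 : ℕ) : ℂ) - ((j.2 : ℕ) : ℂ))))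

/-- The closed rectangle `[f0 − W0, f0 + W0] × [f1 − W1, f1 + W1] ⊆ ℝ²`. -/
def rect2 (f0 f1 W0 W1 : ℝ) : Set (ℝ × ℝ) :=
  Set.Icc (f0 - W0) (f0 + W0) ×ˢ Set.Icc (f1 - W1) (f1 + W1)

/-!
The prolate matrix is the Gram matrix `∫ α αᴴ` over `𝕎` of the sampled exponentials
`α = (exp (2πi (f m + g n)))`. By the min-max principle its `p`-th eigenvalue is at most `B` as
soon as there is a subspace `V` of dimension at most `p` such that `∫ |c ⬝ α|² ≤ B |c|²` for all `c`
annihilating `V`.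

In one dimension, let `x = exp (2πi f)` with `f ∈ [a, b]`. Interpolating
`((1 + X / x) / 2) ^ L * X ^ m` at the `K = M + L` roots of unity writes the vector `(x ^ m)` as a
combination of the vectors `(z ^ m)`, where the weight of a root `z` at distance at least `η` from
`f` is at most `cos (π η) ^ L`. With `L = η M`, these vectors lie, up to an exponentially small
error, in the span of the at most `K (b - a + 2 η) + 1` vectors `(z ^ m)` with `z` near `[a, b]`.
Tensor products of such spans serve a rectangle, and their sum serves a union of rectangles; as
`η → 0` its dimension divided by `M N` approaches the total area.
-/

open scoped ENNReal NNReal FourierTransform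

section VecTensor

variable {R ι κ : Type*} [CommSemiring R]

/-- The tensor product `u ⊗ v` of two vectors, with coordinates indexed by pairs; it is a bilinear
map so that `Submodule.map₂ vecTensor` is the tensor product of subspaces. -/
def vecTensor : (ι → R) →ₗ[R] (κ → R) →ₗ[R] (ι × κ → R) :=
  LinearMap.mk₂ R (fun u v i => u i.1 * v i.2)
    (fun _ _ _ => by ext; simp [add_mul]) (fun _ _ _ => by ext; simp [mul_assoc])
    (fun _ _ _ => by ext; simp [mul_add]) (fun _ _ _ => by ext; simp [mul_left_comm])

@[simp]
theorem vecTensor_apply (u : ι → R) (v : κ → R) (i : ι × κ) :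
    vecTensor u v i = u i.1 * v i.2 := rfl

theorem dotProduct_vecTensor [Fintype ι] [Fintype κ] (w : ι × κ → R) (u : ι → R) (v : κ → R) :
    w ⬝ᵥ vecTensor u v = (fun j => (fun i => w (i, j)) ⬝ᵥ u) ⬝ᵥ v := by
  simp only [dotProduct, vecTensor_apply, Fintype.sum_prod_type_right, Finset.sum_mul, mul_assoc]

end VecTensor

theorem finrank_map₂_le {K V W U : Type*} [Field K] [AddCommGroup V] [Module K V] [AddCommGroup W]
    [Module K W] [AddCommGroup U] [Module K U] (f : V →ₗ[K] W →ₗ[K] U) (p : Submodule K V)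
    (q : Submodule K W) [FiniteDimensional K p] [FiniteDimensional K q] :
    Module.finrank K (Submodule.map₂ f p q) ≤ Module.finrank K p * Module.finrank K q := by
  rw [TensorProduct.map₂_eq_range_lift_comp_mapIncl, ← Module.finrank_tensorProduct]
  exact LinearMap.finrank_range_le _

theorem finrank_iSup_le_sum {K V ι : Type*} [DivisionRing K] [AddCommGroup V] [Module K V]
    [Fintype ι] (p : ι → Submodule K V) [∀ i, FiniteDimensional K (p i)] :
    Module.finrank K (⨆ i, p i : Submodule K V) ≤ ∑ i, Module.finrank K (p i) := by
  rw [← Finset.sup_univ_eq_iSup]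
  induction (Finset.univ : Finset ι) using Finset.cons_induction with
  | empty => simp
  | cons i s hi ih =>
    rw [Finset.sup_cons, Finset.sum_cons]
    exact (Submodule.finrank_add_le_finrank_add_finrank _ _).trans (by gcongr)

section Bessel

variable {𝕜 X Y ι κ : Type*} [RCLike 𝕜] [MeasurableSpace X] [MeasurableSpace Y] [Fintype ι]
  [Fintype κ] {μ : Measure X} {ν : Measure Y}

/-- `B` is a Bessel bound in `L²(μ)` for the finite family of functions formed by the coordinates
of `α`: the largest eigenvalue of their Gram matrix is at most `B`. Working in `ℝ≥0∞` avoids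
integrability side conditions. -/
def HasBesselBound (α : X → ι → 𝕜) (B : ℝ≥0∞) (μ : Measure X) : Prop :=
  ∀ c : ι → 𝕜, ∫⁻ x, ‖c ⬝ᵥ α x‖ₑ ^ 2 ∂μ ≤ B * ∑ i, ‖c i‖ₑ ^ 2

theorem enorm_dotProduct_sq_le (c a : ι → 𝕜) :
    ‖c ⬝ᵥ a‖ₑ ^ 2 ≤ (∑ i, ‖a i‖ₑ ^ 2) * ∑ i, ‖c i‖ₑ ^ 2 := by
  have h : ‖c ⬝ᵥ a‖₊ ^ 2 ≤ (∑ i, ‖a i‖₊ ^ 2) * ∑ i, ‖c i‖₊ ^ 2 := calc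
    ‖c ⬝ᵥ a‖₊ ^ 2 ≤ (∑ i, ‖a i‖₊ * ‖c i‖₊) ^ 2 := by
      gcongr
      exact nnnorm_sum_le_of_le _ fun i _ => (nnnorm_mul_le _ _).trans_eq (mul_comm _ _)
    _ ≤ _ := Finset.sum_mul_sq_le_sq_mul_sq _ _ _
  simp only [enorm_eq_nnnorm]
  exact_mod_cast h

theorem enorm_sub_sq_le {E : Type*} [SeminormedAddCommGroup E] (a b : E) :
    ‖a - b‖ₑ ^ 2 ≤ 2 * (‖a‖ₑ ^ 2 + ‖b‖ₑ ^ 2) := by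
  have h : ‖a - b‖₊ ^ 2 ≤ 2 * (‖a‖₊ ^ 2 + ‖b‖₊ ^ 2) :=
    (pow_le_pow_left' (nnnorm_sub_le a b) 2).trans add_sq_le
  simp only [enorm_eq_nnnorm]
  exact_mod_cast h

namespace HasBesselBound

variable {α α' : X → ι → 𝕜} {β : Y → κ → 𝕜} {A B : ℝ≥0∞}

theorem mono (h : HasBesselBound α A μ) (hAB : A ≤ B) : HasBesselBound α B μ :=
  fun c => (h c).trans (by gcongr)

theorem of_enorm_le {ρ : ℝ≥0∞} (h : ∀ᵐ x ∂μ, ∀ i, ‖α x i‖ₑ ≤ ρ) :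
    HasBesselBound α (Fintype.card ι * ρ ^ 2 * μ univ) μ := fun c => calc
  ∫⁻ x, ‖c ⬝ᵥ α x‖ₑ ^ 2 ∂μ ≤ ∫⁻ _, Fintype.card ι * ρ ^ 2 * ∑ i, ‖c i‖ₑ ^ 2 ∂μ := by
    refine lintegral_mono_ae (h.mono fun x hx => (enorm_dotProduct_sq_le c (α x)).trans ?_)
    gcongr
    calc ∑ i, ‖α x i‖ₑ ^ 2 ≤ ∑ _i : ι, ρ ^ 2 := by gcongr with i; exact hx i
      _ = Fintype.card ι * ρ ^ 2 := by simp
  _ = _ := by rw [lintegral_const]; ring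

theorem sub (hα : Measurable α) (h : HasBesselBound α A μ) (h' : HasBesselBound α' B μ) :
    HasBesselBound (fun x => α x - α' x) (2 * (A + B)) μ := fun c => calc
  ∫⁻ x, ‖c ⬝ᵥ (α x - α' x)‖ₑ ^ 2 ∂μ ≤ ∫⁻ x, 2 * (‖c ⬝ᵥ α x‖ₑ ^ 2 + ‖c ⬝ᵥ α' x‖ₑ ^ 2) ∂μ :=
    lintegral_mono fun x => by simpa only [dotProduct_sub] using enorm_sub_sq_le _ _
  _ = 2 * (∫⁻ x, ‖c ⬝ᵥ α x‖ₑ ^ 2 ∂μ + ∫⁻ x, ‖c ⬝ᵥ α' x‖ₑ ^ 2 ∂μ) := by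
    have hmeas : Measurable fun x => ‖c ⬝ᵥ α x‖ₑ ^ 2 := by unfold dotProduct; fun_prop
    rw [lintegral_const_mul' _ _ (by simp), lintegral_add_left hmeas]
  _ ≤ 2 * (A * ∑ i, ‖c i‖ₑ ^ 2 + B * ∑ i, ‖c i‖ₑ ^ 2) := by gcongr; exacts [h c, h' c]
  _ = _ := by ring

theorem tensor [SFinite ν] (hα : Measurable α) (hβ : Measurable β)
    (hA : HasBesselBound α A μ) (hB : HasBesselBound β B ν) :
    HasBesselBound (fun x : X × Y => vecTensor (α x.1) (β x.2)) (A * B) (μ.prod ν) := fun w => by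
  have hmeas : Measurable fun x : X × Y => ‖w ⬝ᵥ vecTensor (α x.1) (β x.2)‖ₑ ^ 2 := by
    simp only [dotProduct, vecTensor_apply]; fun_prop
  have hmeas' (c : ι → 𝕜) : Measurable fun x => ‖c ⬝ᵥ α x‖ₑ ^ 2 := by unfold dotProduct; fun_prop
  calc ∫⁻ x, ‖w ⬝ᵥ vecTensor (α x.1) (β x.2)‖ₑ ^ 2 ∂μ.prod ν
    _ = ∫⁻ x, ∫⁻ y, ‖(fun j => (fun i => w (i, j)) ⬝ᵥ α x) ⬝ᵥ β y‖ₑ ^ 2 ∂ν ∂μ := by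
      rw [lintegral_prod _ hmeas.aemeasurable]
      simp only [dotProduct_vecTensor]
    _ ≤ ∫⁻ x, B * ∑ j, ‖(fun i => w (i, j)) ⬝ᵥ α x‖ₑ ^ 2 ∂μ := lintegral_mono fun x => hB _
    _ = B * ∑ j, ∫⁻ x, ‖(fun i => w (i, j)) ⬝ᵥ α x‖ₑ ^ 2 ∂μ := by
      rw [lintegral_const_mul _ (Finset.measurable_fun_sum _ fun j _ => hmeas' _),
        lintegral_finsetSum _ fun j _ => hmeas' _]
    _ ≤ B * ∑ j, A * ∑ i, ‖w (i, j)‖ₑ ^ 2 := by gcongr with j; exact hA _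
    _ = _ := by rw [← Finset.mul_sum, Fintype.sum_prod_type_right]; ring

end HasBesselBound

/-- Up to an error with Bessel bound `B` in `L²(μ)`, the vectors `α x` lie in the subspace `V`. By
the min-max principle, the Gram matrix of `α` then has at most `dim V` eigenvalues above `B`. -/
def BesselApprox (α : X → ι → 𝕜) (V : Submodule 𝕜 (ι → 𝕜)) (B : ℝ≥0∞) (μ : Measure X) : Prop :=
  ∃ r : X → ι → 𝕜, Measurable r ∧ (∀ x, α x - r x ∈ V) ∧ HasBesselBound r B μ

namespace BesselApprox

variable {α : X → ι → 𝕜} {β : Y → κ → 𝕜} {V : Submodule 𝕜 (ι → 𝕜)} {W : Submodule 𝕜 (κ → 𝕜)}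
  {A A₀ B B₀ : ℝ≥0∞}

theorem mono (h : BesselApprox α V A μ) (hAB : A ≤ B) : BesselApprox α V B μ :=
  let ⟨r, hr, hV, hA⟩ := h
  ⟨r, hr, hV, hA.mono hAB⟩

theorem lintegral_enorm_dotProduct_sq_le (h : BesselApprox α V B μ) {c : ι → 𝕜}
    (hc : ∀ u ∈ V, c ⬝ᵥ u = 0) : ∫⁻ x, ‖c ⬝ᵥ α x‖ₑ ^ 2 ∂μ ≤ B * ∑ i, ‖c i‖ₑ ^ 2 := by
  obtain ⟨r, -, hV, hB⟩ := h
  have hr (x : X) : c ⬝ᵥ α x = c ⬝ᵥ r x := by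
    rw [← sub_eq_zero, ← dotProduct_sub]; exact hc _ (hV x)
  simpa only [hr] using hB c

/-- If `r` and `s` are the errors of `α` and `β`, then
`α ⊗ β - (α - r) ⊗ (β - s) = r ⊗ β - (r - α) ⊗ s`. -/
theorem tensor [SFinite ν] (hα : Measurable α) (hβ : Measurable β)
    (hA₀ : HasBesselBound α A₀ μ) (hB₀ : HasBesselBound β B₀ ν)
    (hA : BesselApprox α V A μ) (hB : BesselApprox β W B ν) :
    BesselApprox (fun x : X × Y => vecTensor (α x.1) (β x.2)) (Submodule.map₂ vecTensor V W)
      (2 * (A * B₀ + 2 * (A + A₀) * B)) (μ.prod ν) := by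
  obtain ⟨r, hr, hV, hA⟩ := hA
  obtain ⟨s, hs, hW, hB⟩ := hB
  have hrβ : Measurable fun x : X × Y => vecTensor (r x.1) (β x.2) :=
    measurable_pi_lambda _ fun i => by simp only [vecTensor_apply]; fun_prop
  have hrαs : Measurable fun x : X × Y => vecTensor (r x.1 - α x.1) (s x.2) :=
    measurable_pi_lambda _ fun i => by simp only [vecTensor_apply, Pi.sub_apply]; fun_prop
  have hmr : Measurable fun x => r x - α x := hr.sub hα
  have hαs := (HasBesselBound.sub hr hA hA₀).tensor hmr hs hB
  refine ⟨fun x => vecTensor (r x.1) (β x.2) - vecTensor (r x.1 - α x.1) (s x.2), hrβ.sub hrαs,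
    fun x => ?_, (hA.tensor hr hβ hB₀).sub hrβ hαs⟩
  have hmem := Submodule.apply_mem_map₂ vecTensor (hV x.1) (hW x.2)
  have hsplit : vecTensor (α x.1) (β x.2) - (vecTensor (r x.1) (β x.2)
      - vecTensor (r x.1 - α x.1) (s x.2)) = vecTensor (α x.1 - r x.1) (β x.2 - s x.2) := by
    simp only [map_sub, LinearMap.sub_apply]
    abel
  rwa [hsplit]

end BesselApprox

end Bessel

section MinMax

open Module RCLike
open scoped InnerProductSpace

variable {𝕜 E ι : Type*} [RCLike 𝕜] [NormedAddCommGroup E] [InnerProductSpace 𝕜 E] [Fintype ι]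
  {T : E →ₗ[𝕜] E} {ev : ι → ℝ}

theorem re_inner_apply_eq_sum (b : OrthonormalBasis ι 𝕜 E)
    (hT : ∀ i, T (b i) = (ev i : 𝕜) • b i) (v : E) :
    re ⟪v, T v⟫_𝕜 = ∑ i, ev i * ‖⟪b i, v⟫_𝕜‖ ^ 2 := by
  have hTv : T v = ∑ i, ⟪b i, v⟫_𝕜 • (ev i : 𝕜) • b i := by
    conv_lhs => rw [← b.sum_repr' v, map_sum]
    simp only [map_smul, hT]
  rw [hTv, inner_sum, map_sum]
  refine Finset.sum_congr rfl fun i _ => ?_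
  rw [inner_smul_right, inner_smul_right, mul_left_comm, ← inner_conj_symm v, mul_conj]
  norm_cast

/-- A nonzero vector orthogonal both to `V` and to the eigenvectors with eigenvalue `< l` exists by
counting dimensions. -/
theorem exists_mem_orthogonal_le_re_inner (b : OrthonormalBasis ι 𝕜 E)
    (hT : ∀ i, T (b i) = (ev i : 𝕜) • b i) (V : Submodule 𝕜 E) {l : ℝ}
    (hV : finrank 𝕜 V < Finset.card {i | l ≤ ev i}) :
    ∃ v ∈ Vᗮ, v ≠ 0 ∧ l * ‖v‖ ^ 2 ≤ re ⟪v, T v⟫_𝕜 := by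
  classical
  have := b.toBasis.finiteDimensional_of_finite
  let s : Finset ι := {i | ¬ l ≤ ev i}
  let U : Submodule 𝕜 E := Submodule.span 𝕜 (s.image b : Finset E)
  have hU : finrank 𝕜 U ≤ s.card := (finrank_span_finset_le_card _).trans Finset.card_image_le
  have hcard : Finset.card {i | l ≤ ev i} + s.card = finrank 𝕜 E := by
    rw [finrank_eq_card_basis b.toBasis, Finset.card_filter_add_card_filter_not, Finset.card_univ]
  have hne : V ⊔ U ≠ ⊤ := fun h => by
    have := Submodule.finrank_add_le_finrank_add_finrank V U
    rw [h, finrank_top] at this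
    omega
  obtain ⟨v, hv, hv0⟩ := Submodule.exists_mem_ne_zero_of_ne_bot
    (mt (Submodule.orthogonal_eq_bot_iff).1 hne)
  refine ⟨v, Submodule.orthogonal_le le_sup_left hv, hv0, ?_⟩
  rw [re_inner_apply_eq_sum b hT, ← b.sum_sq_norm_inner_right v, Finset.mul_sum]
  refine Finset.sum_le_sum fun i _ => ?_
  by_cases hi : l ≤ ev i
  · gcongr
  · have hbi : b i ∈ V ⊔ U := Submodule.mem_sup_right <| Submodule.subset_span <| by
      simpa using ⟨i, by simpa [s] using hi, rfl⟩
    simp [Submodule.inner_right_of_mem_orthogonal hbi hv]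

variable {n : Type*} [Fintype n] [DecidableEq n] {A : Matrix n n 𝕜}

theorem exists_quadForm_ge_of_finrank_lt (hA : A.IsHermitian) (V : Submodule 𝕜 (n → 𝕜)) {l : ℝ}
    (hV : finrank 𝕜 V < Finset.card {i | l ≤ hA.eigenvalues i}) :
    ∃ v : n → 𝕜, (∀ u ∈ V, star v ⬝ᵥ u = 0) ∧ v ≠ 0 ∧
      l * ∑ i, ‖v i‖ ^ 2 ≤ re (star v ⬝ᵥ A *ᵥ v) := by
  let φ := WithLp.linearEquiv 2 𝕜 (n → 𝕜)
  obtain ⟨v, hv, hv0, hle⟩ := exists_mem_orthogonal_le_re_inner (T := toEuclideanLin A)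
    hA.eigenvectorBasis
    (fun i => by rw [toLpLin_apply, hA.mulVec_eigenvectorBasis, ← real_smul_eq_coe_smul]; rfl)
    (V.map φ.symm.toLinearMap) (by rwa [LinearEquiv.finrank_map_eq])
  refine ⟨v.ofLp, fun u hu => ?_, by simpa using hv0, ?_⟩
  · simpa [EuclideanSpace.inner_eq_star_dotProduct, φ, dotProduct_comm] using
      (Submodule.mem_orthogonal' _ _).1 hv _ (Submodule.mem_map_of_mem hu)
  · simpa [EuclideanSpace.inner_eq_star_dotProduct, dotProduct_comm, EuclideanSpace.norm_sq_eq]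
      using hle

theorem antitone_eigenvalue_le_of_quadForm_le (hA : A.IsHermitian) (V : Submodule 𝕜 (n → 𝕜))
    {B : ℝ} (hB : ∀ v : n → 𝕜, (∀ u ∈ V, star v ⬝ᵥ u = 0) →
      re (star v ⬝ᵥ A *ᵥ v) ≤ B * ∑ i, ‖v i‖ ^ 2)
    {d : ℕ} {μ : Fin d → ℝ} (hμ : Antitone μ) (e : n ≃ Fin d) (he : hA.eigenvalues = μ ∘ e)
    {p : Fin d} (hp : finrank 𝕜 V ≤ p) : μ p ≤ B := by
  have hcard : (p : ℕ) + 1 ≤ Finset.card {i | μ p ≤ hA.eigenvalues i} := by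
    rw [← Fin.card_Iic, ← Finset.card_map e.symm.toEmbedding]
    refine Finset.card_le_card fun i hi => ?_
    obtain ⟨q, hq, rfl⟩ := Finset.mem_map.1 hi
    simpa [he] using hμ (Finset.mem_Iic.1 hq)
  obtain ⟨v, hv, hv0, hle⟩ := exists_quadForm_ge_of_finrank_lt hA V (l := μ p) (by omega)
  have hpos : 0 < ∑ i, ‖v i‖ ^ 2 := by
    obtain ⟨i, hi⟩ := Function.ne_iff.1 hv0
    exact Finset.sum_pos' (fun _ _ => by positivity)
      ⟨i, Finset.mem_univ i, pow_pos (norm_pos_iff.2 hi) 2⟩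
  exact le_of_mul_le_mul_right (hle.trans (hB v hv)) hpos

end MinMax

section QuadForm

variable {𝕜 X ι : Type*} [RCLike 𝕜] [MeasurableSpace X] [Fintype ι] {μ : Measure X}
  {α : X → ι → 𝕜}

theorem star_dotProduct_integral_mulVec (hα : ∀ i, MemLp (fun x => α x i) 2 μ) (v : ι → 𝕜) :
    star v ⬝ᵥ (Matrix.of fun i j => ∫ x, α x i * star (α x j) ∂μ) *ᵥ v =
      (∫ x, ‖star v ⬝ᵥ α x‖ ^ 2 ∂μ : ℝ) := by
  have hsq (x : X) : ((‖star v ⬝ᵥ α x‖ ^ 2 : ℝ) : 𝕜) =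
      ∑ i, ∑ j, star (v i) * (α x i * star (α x j) * v j) := by
    rw [RCLike.ofReal_pow, ← RCLike.mul_conj, dotProduct, map_sum, Finset.sum_mul_sum]
    refine Finset.sum_congr rfl fun i _ => Finset.sum_congr rfl fun j _ => ?_
    simp only [Pi.star_apply, starRingEnd_apply, star_mul', star_star]
    ring
  have hint (i j : ι) : Integrable (fun x => star (v i) * (α x i * star (α x j) * v j)) μ :=
    (((hα i).integrable_mul (hα j).star).mul_const _).const_mul _
  rw [← integral_ofReal]
  simp only [hsq]
  simp only [dotProduct, mulVec, of_apply, Pi.star_apply]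
  rw [integral_finsetSum _ fun i _ => integrable_finsetSum _ fun j _ => hint i j]
  refine Finset.sum_congr rfl fun i _ => ?_
  rw [integral_finsetSum _ fun j _ => hint i j, Finset.mul_sum]
  simp only [integral_const_mul, integral_mul_const]

theorem lintegral_enorm_dotProduct_sq_eq_sum [DecidableEq ι]
    (hα : ∀ i, MemLp (fun x => α x i) 2 μ)
    (h : ∀ i j, ∫ x, α x i * star (α x j) ∂μ = if i = j then 1 else 0) (c : ι → 𝕜) :
    ∫⁻ x, ‖c ⬝ᵥ α x‖ₑ ^ 2 ∂μ = ∑ i, ‖c i‖ₑ ^ 2 := by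
  have hL2 : MemLp (fun x => c ⬝ᵥ α x) 2 μ :=
    memLp_finsetSum _ fun i _ => (hα i).const_mul (c i)
  have hone : (Matrix.of fun i j => ∫ x, α x i * star (α x j) ∂μ) = 1 := by
    ext i j; rw [of_apply, h, one_apply]
  have hreal : ∫ x, ‖c ⬝ᵥ α x‖ ^ 2 ∂μ = ∑ i, ‖c i‖ ^ 2 := by
    have := star_dotProduct_integral_mulVec hα (star c)
    rw [hone, one_mulVec, star_star] at this
    have hc : c ⬝ᵥ star c = ((∑ i, ‖c i‖ ^ 2 : ℝ) : 𝕜) := by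
      push_cast
      exact Finset.sum_congr rfl fun i _ => RCLike.mul_conj _
    exact_mod_cast (hc.symm.trans this).symm
  calc ∫⁻ x, ‖c ⬝ᵥ α x‖ₑ ^ 2 ∂μ = ENNReal.ofReal (∫ x, ‖c ⬝ᵥ α x‖ ^ 2 ∂μ) := by
        rw [ofReal_integral_eq_lintegral_ofReal (hL2.integrable_norm_pow two_ne_zero)
          (.of_forall fun _ => by positivity)]
        simp only [← ofReal_norm, ENNReal.ofReal_pow (norm_nonneg _)]
    _ = _ := by
        rw [hreal, ENNReal.ofReal_sum_of_nonneg fun _ _ => by positivity]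
        simp only [← ofReal_norm, ENNReal.ofReal_pow (norm_nonneg _)]

theorem integral_norm_sq_le_of_lintegral_enorm_sq_le {E : Type*} [NormedAddCommGroup E]
    {f : X → E} {B : ℝ} (hB : 0 ≤ B) {v : ι → 𝕜}
    (h : ∫⁻ x, ‖f x‖ₑ ^ 2 ∂μ ≤ ENNReal.ofReal B * ∑ i, ‖v i‖ₑ ^ 2) :
    ∫ x, ‖f x‖ ^ 2 ∂μ ≤ B * ∑ i, ‖v i‖ ^ 2 := by
  rw [← ENNReal.ofReal_le_ofReal_iff (by positivity)]
  calc ENNReal.ofReal (∫ x, ‖f x‖ ^ 2 ∂μ) = ‖∫ x, ‖f x‖ ^ 2 ∂μ‖ₑ :=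
        (Real.enorm_of_nonneg (integral_nonneg fun _ => by positivity)).symm
    _ ≤ ∫⁻ x, ‖f x‖ₑ ^ 2 ∂μ := by
        refine (enorm_integral_le_lintegral_enorm _).trans_eq (lintegral_congr fun x => ?_)
        rw [enorm_pow, enorm_norm]
    _ ≤ _ := h
    _ = ENNReal.ofReal (B * ∑ i, ‖v i‖ ^ 2) := by
        rw [ENNReal.ofReal_mul hB, ENNReal.ofReal_sum_of_nonneg fun _ _ => by positivity]
        simp only [← ofReal_norm, ENNReal.ofReal_pow (norm_nonneg _)]

end QuadForm

section SampledExp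

variable {M : ℕ}

/-- The exponential of frequency `f` sampled at `0, …, M - 1`, that is, the vector with entries
`exp (2πi f m)`. -/
noncomputable def sampledExp (M : ℕ) (f : ℝ) : Fin M → ℂ := fun m => (𝐞 f : ℂ) ^ (m : ℕ)

theorem continuous_sampledExp (M : ℕ) : Continuous (sampledExp M) := by
  have := continuous_fourierChar
  unfold sampledExp
  fun_prop

theorem norm_sampledExp (f : ℝ) (m : Fin M) : ‖sampledExp M f m‖ = 1 := by
  rw [sampledExp, norm_pow, Circle.norm_coe, one_pow]

theorem memLp_sampledExp (μ : Measure ℝ) [IsFiniteMeasure μ] (m : Fin M) :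
    MemLp (fun f => sampledExp M f m) 2 μ :=
  .of_bound (((continuous_apply m).comp (continuous_sampledExp M)).aestronglyMeasurable) 1
    (.of_forall fun f => (norm_sampledExp f m).le)

theorem integral_sampledExp_mul_star (t : ℝ) (m n : Fin M) :
    ∫ f in Ioc t (t + 1), sampledExp M f m * star (sampledExp M f n) = if m = n then 1 else 0 := by
  have horth := orthonormal_iff_ite.1 (orthonormal_fourier (T := 1)) n m
  have hcoe (k : Fin M) (f : ℝ) : fourier (T := 1) k f = sampledExp M f k := by
    rw [sampledExp, fourier_coe_apply, Real.fourierChar_apply, ← Complex.exp_nat_mul]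
    congr 1
    push_cast
    ring
  rw [fourierLp, fourierLp, ContinuousMap.inner_toLp, AddCircle.integral_haarAddCircle, inv_one,
    one_smul, ← UnitAddCircle.integral_preimage t] at horth
  simpa only [hcoe, Nat.cast_inj, Fin.val_inj, eq_comm, Complex.star_def] using horth

theorem hasBesselBound_sampledExp_Ioc (a : ℝ) (n : ℕ) :
    HasBesselBound (sampledExp M) n (volume.restrict (Ioc a (a + n))) := by
  intro c
  induction n with
  | zero => simp
  | succ n ih =>
    have hone := lintegral_enorm_dotProduct_sq_eq_sum (memLp_sampledExp _)
      (integral_sampledExp_mul_star (a + n)) c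
    calc ∫⁻ f in Ioc a (a + (n + 1 : ℕ)), ‖c ⬝ᵥ sampledExp M f‖ₑ ^ 2
      _ ≤ ∫⁻ f in Ioc a (a + n) ∪ Ioc (a + n) (a + n + 1), ‖c ⬝ᵥ sampledExp M f‖ₑ ^ 2 := by
        refine lintegral_mono_set ?_
        rw [Ioc_union_Ioc_eq_Ioc (by simp) (by simp), Nat.cast_succ, add_assoc]
      _ ≤ n * ∑ i, ‖c i‖ₑ ^ 2 + ∑ i, ‖c i‖ₑ ^ 2 :=
        (lintegral_union_le _ _ _).trans (add_le_add ih hone.le)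
      _ = (n + 1 : ℕ) * ∑ i, ‖c i‖ₑ ^ 2 := by push_cast; ring

theorem hasBesselBound_sampledExp_Icc (a b : ℝ) :
    HasBesselBound (sampledExp M) ⌈b - a⌉₊ (volume.restrict (Icc a b)) := fun c => by
  rw [← restrict_Ioc_eq_restrict_Icc]
  exact (lintegral_mono_set (Ioc_subset_Ioc_right (by linarith [Nat.le_ceil (b - a)]))).trans
    (hasBesselBound_sampledExp_Ioc a _ c)

end SampledExp

section Interpolation

open Polynomial

variable {K L m : ℕ} {z x : ℂ}

theorem eval_basis_nthRootsFinset (hz : z ∈ nthRootsFinset K (1 : ℂ)) (x : ℂ) :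
    (Lagrange.basis (nthRootsFinset K (1 : ℂ)) id z).eval x =
      (K : ℂ)⁻¹ * ∑ s ∈ Finset.range K, (x / z) ^ s := by
  have hK : 0 < K := Nat.pos_of_ne_zero fun h => by simp [h] at hz
  have hcard := (Complex.isPrimitiveRoot_exp K hK.ne').card_nthRootsFinset
  have hz0 : z ≠ 0 := ne_zero_of_mem_nthRootsFinset one_ne_zero hz
  have hz1 : z ^ K = 1 := (mem_nthRootsFinset hK 1).1 hz
  let P : ℂ[X] := ∑ s ∈ Finset.range K, C ((K : ℂ)⁻¹ * z⁻¹ ^ s) * X ^ s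
  have hP (w : ℂ) : P.eval w = (K : ℂ)⁻¹ * ∑ s ∈ Finset.range K, (w / z) ^ s := by
    simp [P, eval_finsetSum, div_eq_inv_mul, mul_pow, mul_assoc, Finset.mul_sum]
  rw [← hP]
  congr 1
  refine eq_of_degrees_lt_of_eval_finset_eq (nthRootsFinset K (1 : ℂ)) ?_ ?_ fun w hw => ?_
  · rw [Lagrange.degree_basis (injOn_id _) hz, hcard]
    exact_mod_cast Nat.sub_lt hK one_pos
  · rw [hcard]
    exact mem_degreeLT.1 <| sum_mem fun s hs => mem_degreeLT.2 <|
      (degree_C_mul_X_pow_le s _).trans_lt (by exact_mod_cast Finset.mem_range.1 hs)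
  rw [hP]
  obtain rfl | hne := eq_or_ne w z
  · have hbasis : (Lagrange.basis (nthRootsFinset K (1 : ℂ)) id w).eval w = 1 :=
      Lagrange.eval_basis_self (v := id) (injOn_id _) hw
    simp [hbasis, hz0, hK.ne']
  · have hbasis : (Lagrange.basis (nthRootsFinset K (1 : ℂ)) id z).eval w = 0 :=
      Lagrange.eval_basis_of_ne (v := id) hne.symm hw
    rw [hbasis, geom_sum_eq (by rwa [Ne, div_eq_one_iff_eq hz0]),
      div_pow, (mem_nthRootsFinset hK 1).1 hw, hz1]
    simp

theorem norm_eval_basis_nthRootsFinset_le (hz : z ∈ nthRootsFinset K (1 : ℂ)) (hx : ‖x‖ = 1) :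
    ‖(Lagrange.basis (nthRootsFinset K (1 : ℂ)) id z).eval x‖ ≤ 1 := by
  have hK : 0 < K := Nat.pos_of_ne_zero fun h => by simp [h] at hz
  have hz1 : ‖z‖ = 1 := Complex.norm_eq_one_of_pow_eq_one ((mem_nthRootsFinset hK 1).1 hz) hK.ne'
  have hsum : ‖∑ s ∈ Finset.range K, (x / z) ^ s‖ ≤ K :=
    (norm_sum_le _ _).trans_eq (by simp [hx, hz1])
  rw [eval_basis_nthRootsFinset hz, norm_mul, norm_inv, Complex.norm_natCast]
  exact inv_mul_le_one_of_le₀ hsum (by positivity)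

/-- Lagrange interpolation of `((1 + X / x) / 2) ^ L * X ^ m`, whose value at `x` is `x ^ m`. -/
theorem pow_eq_sum_nthRootsFinset (hx : x ≠ 0) (h : L + m < K) :
    x ^ m = ∑ z ∈ nthRootsFinset K (1 : ℂ),
      ((1 + z / x) / 2) ^ L * (Lagrange.basis (nthRootsFinset K (1 : ℂ)) id z).eval x * z ^ m := by
  have hcard := (Complex.isPrimitiveRoot_exp K (by omega)).card_nthRootsFinset
  let P : ℂ[X] := (C 2⁻¹ * (1 + C x⁻¹ * X)) ^ L * X ^ m
  have hP (w : ℂ) : P.eval w = ((1 + w / x) / 2) ^ L * w ^ m := by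
    simp [P, div_eq_inv_mul]
  have hdeg : P.degree < (nthRootsFinset K (1 : ℂ)).card := by
    have hle : P.degree ≤ ((L + m : ℕ) : WithBot ℕ) := by
      dsimp only [P]
      compute_degree
      exact (Nat.cast_add L m).ge
    rw [hcard]
    exact hle.trans_lt (by exact_mod_cast h)
  have := congrArg (eval x) (Lagrange.eq_interpolate (injOn_id _) hdeg)
  rw [Lagrange.interpolate_apply, eval_finsetSum, hP, div_self hx] at this
  simp only [eval_mul, eval_C, id, hP] at this
  norm_num at this
  rw [this]
  exact Finset.sum_congr rfl fun z _ => by ring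

end Interpolation

section NearNodes

variable {K : ℕ} {a b f δ t : ℝ}

theorem norm_one_add_fourierChar_div_two_le (h0 : 0 ≤ δ) (h : ∀ n : ℤ, δ ≤ |t - n|) :
    ‖(1 + (𝐞 t : ℂ)) / 2‖ ≤ Real.cos (π * δ) := by
  have hhalf : (1 + (𝐞 t : ℂ)) / 2 = Complex.exp (π * t * Complex.I) * Real.cos (π * t) := by
    rw [Real.fourierChar_apply, Complex.ofReal_cos, Complex.cos, ← mul_div_assoc, mul_add,
      ← Complex.exp_add, ← Complex.exp_add, add_comm, ← Complex.exp_zero]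
    congr 3 <;> push_cast <;> ring
  have hround := abs_sub_round t
  have hnorm : ‖(1 + (𝐞 t : ℂ)) / 2‖ = Real.cos (π * |t - round t|) := calc
    ‖(1 + (𝐞 t : ℂ)) / 2‖ = |Real.cos (π * t)| := by
      rw [hhalf, norm_mul, ← Complex.ofReal_mul, Complex.norm_exp_ofReal_mul_I, one_mul,
        Complex.norm_real, Real.norm_eq_abs]
    _ = |Real.cos (π * (t - round t))| := by
      rw [mul_sub, mul_comm π (round t : ℝ), Real.cos_sub_int_mul_pi, abs_mul, abs_neg_one_zpow,
        one_mul]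
    _ = |Real.cos (π * |t - round t|)| := by
      rw [← Real.cos_abs, abs_mul, abs_of_pos pi_pos]
    _ = _ := abs_of_nonneg <| Real.cos_nonneg_of_mem_Icc
      ⟨by nlinarith [pi_pos, abs_nonneg (t - round t)], by nlinarith [pi_pos]⟩
  rw [hnorm]
  exact Real.cos_le_cos_of_nonneg_of_le_pi (by positivity) (by nlinarith [pi_pos])
    (by gcongr; exact h _)

/-- The nodes `exp (2πi k / K)` with `k / K` within `δ` of the interval `[a, b]`; their powers span
the subspace approximating the sampled exponentials with frequencies in `[a, b]`. -/
noncomputable def nearNodes (K : ℕ) (a b δ : ℝ) : Finset ℂ :=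
  (Finset.Icc ⌈K * (a - δ)⌉ ⌊K * (b + δ)⌋).image fun k : ℤ => (𝐞 (k / K : ℝ) : ℂ)

theorem card_nearNodes_le (hab : a ≤ b) (hδ : 0 ≤ δ) :
    ((nearNodes K a b δ).card : ℝ) ≤ K * (b - a + 2 * δ) + 1 := by
  have hle : (⌊K * (b + δ)⌋ + 1 - ⌈K * (a - δ)⌉ : ℝ) ≤ K * (b - a + 2 * δ) + 1 := by
    linarith [Int.le_ceil (K * (a - δ)), Int.floor_le (K * (b + δ))]
  have : 0 ≤ b - a + 2 * δ := by linarith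
  calc ((nearNodes K a b δ).card : ℝ)
    _ ≤ ((⌊K * (b + δ)⌋ + 1 - ⌈K * (a - δ)⌉).toNat : ℝ) := by
      rw [← Int.card_Icc]
      exact Nat.cast_le.2 Finset.card_image_le
    _ ≤ K * (b - a + 2 * δ) + 1 := by
      rw [← Int.cast_natCast, Int.toNat_eq_max]
      push_cast
      exact max_le hle (by positivity)

theorem exists_fourierChar_of_pow_eq_one (hK : K ≠ 0) {z : ℂ} (hz : z ^ K = 1) :
    ∃ j : ℤ, z = 𝐞 (j / K : ℝ) := by
  have := NeZero.mk hK
  obtain ⟨j, -, rfl⟩ := (Complex.isPrimitiveRoot_exp K hK).eq_pow_of_pow_eq_one hz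
  refine ⟨j, ?_⟩
  rw [Real.fourierChar_apply, ← Complex.exp_nat_mul]
  congr 1
  push_cast
  ring

theorem norm_one_add_div_le_of_notMem_nearNodes (hK : K ≠ 0) (h0 : 0 ≤ δ)
    (hf : f ∈ Icc a b) {z : ℂ} (hz : z ^ K = 1) (hfar : z ∉ nearNodes K a b δ) :
    ‖(1 + z / 𝐞 f) / 2‖ ≤ Real.cos (π * δ) := by
  obtain ⟨j, rfl⟩ := exists_fourierChar_of_pow_eq_one hK hz
  rw [← Circle.coe_div, ← AddChar.map_sub_eq_div]
  refine norm_one_add_fourierChar_div_two_le h0 fun n => ?_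
  by_contra! hlt
  refine hfar (Finset.mem_image.2 ⟨j - n * K, ?_, ?_⟩)
  · have hK' : (0 : ℝ) < K := by positivity
    have hj : (j - n * K : ℝ) = K * (j / K - n) := by field_simp
    obtain ⟨h1, h2⟩ := abs_lt.1 hlt
    rw [Finset.mem_Icc, Int.ceil_le, Int.le_floor]
    push_cast
    rw [hj]
    exact ⟨mul_le_mul_of_nonneg_left (by linarith [hf.1]) hK'.le,
      mul_le_mul_of_nonneg_left (by linarith [hf.2]) hK'.le⟩
  · push_cast
    rw [sub_div, mul_div_cancel_right₀ _ (by positivity), AddChar.map_sub_eq_div,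
      Real.fourierChar_apply' n, Circle.exp_two_pi_mul_int, div_one]

end NearNodes

section OneDim

open Polynomial (nthRootsFinset)

variable {M L : ℕ} {a b δ : ℝ}

/-- The weight of the node `z` in the interpolation formula `pow_eq_sum_nthRootsFinset` for the
`K`-th roots of unity, at the point `exp (2πi f)`. -/
noncomputable def nodeWeight (K L : ℕ) (z : ℂ) (f : ℝ) : ℂ :=
  ((1 + z / 𝐞 f) / 2) ^ L * (Lagrange.basis (nthRootsFinset K (1 : ℂ)) id z).eval (𝐞 f : ℂ)

theorem measurable_nodeWeight (K L : ℕ) (z : ℂ) : Measurable (nodeWeight K L z) := by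
  have he : Measurable fun f : ℝ => (𝐞 f : ℂ) :=
    (continuous_subtype_val.comp Real.continuous_fourierChar).measurable
  have hbasis (P : Polynomial ℂ) : Measurable fun f : ℝ => P.eval (𝐞 f : ℂ) :=
    P.continuous.measurable.comp he
  exact ((((he.const_div z).const_add 1).div_const 2).pow_const L).mul (hbasis _)

theorem norm_nodeWeight_le {K : ℕ} {z : ℂ} {f : ℝ} (hz : z ∈ nthRootsFinset K (1 : ℂ))
    (hfar : z ∉ nearNodes K a b δ) (hδ : 0 ≤ δ) (hf : f ∈ Icc a b) :
    ‖nodeWeight K L z f‖ ≤ Real.cos (π * δ) ^ L := by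
  have hK : 0 < K := Nat.pos_of_ne_zero fun h => by simp [h] at hz
  have hz1 := (Polynomial.mem_nthRootsFinset hK 1).1 hz
  rw [nodeWeight, norm_mul, norm_pow, ← mul_one (Real.cos (π * δ) ^ L)]
  gcongr
  · exact pow_nonneg ((norm_nonneg _).trans
      (norm_one_add_div_le_of_notMem_nearNodes hK.ne' hδ hf hz1 hfar)) L
  · exact norm_one_add_div_le_of_notMem_nearNodes hK.ne' hδ hf hz1 hfar
  · exact norm_eval_basis_nthRootsFinset_le hz (Circle.norm_coe _)

theorem norm_sum_nodeWeight_mul_pow_le {K : ℕ} {f : ℝ} (L : ℕ) (hδ : δ ∈ Icc 0 (1 / 2))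
    (hf : f ∈ Icc a b) (m : ℕ) :
    ‖∑ z ∈ nthRootsFinset K (1 : ℂ) \ nearNodes K a b δ, nodeWeight K L z f * z ^ m‖ ≤
      K * Real.cos (π * δ) ^ L := by
  obtain rfl | hK := K.eq_zero_or_pos
  · simp
  have hcos : 0 ≤ Real.cos (π * δ) :=
    Real.cos_nonneg_of_mem_Icc ⟨by nlinarith [pi_pos, hδ.1], by nlinarith [pi_pos, hδ.2]⟩
  have hterm (z : ℂ) (hz : z ∈ nthRootsFinset K (1 : ℂ) \ nearNodes K a b δ) :
      ‖nodeWeight K L z f * z ^ m‖ ≤ Real.cos (π * δ) ^ L := by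
    obtain ⟨hzR, hzS⟩ := Finset.mem_sdiff.1 hz
    have hz1 := (Polynomial.mem_nthRootsFinset hK 1).1 hzR
    rw [norm_mul, norm_pow, Complex.norm_eq_one_of_pow_eq_one hz1 hK.ne', one_pow, mul_one]
    exact norm_nodeWeight_le hzR hzS hδ.1 hf
  refine (norm_sum_le _ _).trans ((Finset.sum_le_card_nsmul _ _ _ hterm).trans ?_)
  rw [nsmul_eq_mul]
  gcongr
  refine (Finset.card_le_card Finset.sdiff_subset).trans_eq ?_
  rw [(Complex.isPrimitiveRoot_exp _ hK.ne').card_nthRootsFinset]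

theorem exists_besselApprox_sampledExp (M L : ℕ) (hab : a ≤ b) (hδ : δ ∈ Icc 0 (1 / 2)) :
    ∃ V : Submodule ℂ (Fin M → ℂ), (Module.finrank ℂ V : ℝ) ≤ (M + L) * (b - a + 2 * δ) + 1 ∧
      BesselApprox (sampledExp M) V
        (M * ENNReal.ofReal ((M + L) * Real.cos (π * δ) ^ L) ^ 2 * ENNReal.ofReal (b - a))
        (volume.restrict (Icc a b)) := by
  let S := nearNodes (M + L) a b δ
  let R := nthRootsFinset (M + L) (1 : ℂ)
  let node (z : ℂ) : Fin M → ℂ := fun m => z ^ (m : ℕ)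
  let r (f : ℝ) : Fin M → ℂ := ∑ z ∈ R \ S, nodeWeight (M + L) L z f • node z
  have hsplit (f : ℝ) : sampledExp M f - r f =
      ∑ z ∈ R ∩ S, nodeWeight (M + L) L z f • node z := by
    rw [sub_eq_iff_eq_add, Finset.sum_inter_add_sum_sdiff]
    ext m
    simpa [sampledExp, node, nodeWeight, R] using
      pow_eq_sum_nthRootsFinset (x := 𝐞 f) (Circle.coe_ne_zero _) (L := L) (m := m) (by omega)
  have hr (f : ℝ) (hf : f ∈ Icc a b) (m : Fin M) :
      ‖r f m‖ ≤ (M + L) * Real.cos (π * δ) ^ L := by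
    rw [← Nat.cast_add]
    simpa [r, node] using norm_sum_nodeWeight_mul_pow_le (K := M + L) L hδ hf m
  refine ⟨Submodule.span ℂ (S.image node : Finset (Fin M → ℂ)), ?_, r, ?_, fun f => ?_, ?_⟩
  · have hS := card_nearNodes_le (K := M + L) hab hδ.1
    rw [Nat.cast_add] at hS
    refine le_trans ?_ hS
    exact_mod_cast (finrank_span_finset_le_card _).trans Finset.card_image_le
  · exact Finset.measurable_sum _ fun z _ => (measurable_nodeWeight _ _ _).smul_const _
  · rw [hsplit]
    refine sum_mem fun z hz => Submodule.smul_mem _ _ (Submodule.subset_span ?_)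
    exact_mod_cast Finset.mem_image_of_mem node (Finset.mem_inter.1 hz).2
  · have := HasBesselBound.of_enorm_le (α := r) (μ := volume.restrict (Icc a b))
      (ρ := ENNReal.ofReal ((M + L) * Real.cos (π * δ) ^ L))
      ((ae_restrict_mem measurableSet_Icc).mono fun f hf m => by
        rw [← ofReal_norm]; exact ENNReal.ofReal_le_ofReal (hr f hf m))
    simpa using this

end OneDim

section Asymptotics

open Filter Topology Module

variable {a b s : ℝ}

theorem pow_three_mul_exp_neg_mul_le {c x : ℝ} (hc : 0 < c) (hx : 0 ≤ x) :
    x ^ 3 * Real.exp (-c * x) ≤ 6 / c ^ 3 := by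
  have h := Real.pow_div_factorial_le_exp (c * x) (by positivity) 3
  rw [neg_mul, Real.exp_neg, ← div_eq_mul_inv, div_le_div_iff₀ (by positivity) (by positivity)]
  rw [mul_pow, div_le_iff₀ (by positivity)] at h
  norm_num [Nat.factorial] at h
  linarith

theorem pow_natFloor_le_inv_mul_exp {q t : ℝ} (hq0 : 0 < q) (hq1 : q ≤ 1) :
    q ^ ⌊t⌋₊ ≤ q⁻¹ * Real.exp (Real.log q * t) := by
  have hlog := Real.log_nonpos hq0.le hq1
  calc q ^ ⌊t⌋₊ = Real.exp (Real.log q * ⌊t⌋₊) := by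
        rw [← Real.rpow_natCast, Real.rpow_def_of_pos hq0]
    _ ≤ Real.exp (-Real.log q + Real.log q * t) := by
        gcongr
        nlinarith [Nat.sub_one_lt_floor t]
    _ = _ := by rw [Real.exp_add, Real.exp_neg, Real.exp_log hq0]

theorem exists_mul_sq_le_exp_neg {η q : ℝ} (hη : 0 < η) (hq0 : 0 < q) (hq1 : q < 1) :
    ∃ C : ℝ≥0, ∃ c > 0, ∀ M : ℕ,
      M * ((M + ⌊η * M⌋₊) * q ^ ⌊η * M⌋₊) ^ 2 ≤ C * Real.exp (-c * M) := by
  let c := -(Real.log q * η)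
  have hc : 0 < c := neg_pos.2 (mul_neg_of_neg_of_pos (Real.log_neg hq0 hq1) hη)
  refine ⟨⟨(1 + η) ^ 2 * q⁻¹ ^ 2 * (6 / c ^ 3), by positivity⟩, c, hc, fun M => ?_⟩
  have hpow : q ^ ⌊η * M⌋₊ ≤ q⁻¹ * Real.exp (-c * M) := by
    simpa only [c, neg_neg, mul_assoc] using pow_natFloor_le_inv_mul_exp (t := η * M) hq0 hq1.le
  have hK : (M + ⌊η * M⌋₊ : ℝ) ≤ (1 + η) * M := by
    linarith [Nat.floor_le (show 0 ≤ η * M by positivity)]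
  calc M * ((M + ⌊η * M⌋₊) * q ^ ⌊η * M⌋₊) ^ 2
    _ ≤ M * ((1 + η) * M * (q⁻¹ * Real.exp (-c * M))) ^ 2 := by gcongr
    _ = (1 + η) ^ 2 * q⁻¹ ^ 2 * ((M : ℝ) ^ 3 * Real.exp (-c * M)) * Real.exp (-c * M) := by ring
    _ ≤ (1 + η) ^ 2 * q⁻¹ ^ 2 * (6 / c ^ 3) * Real.exp (-c * M) := by
      gcongr
      exact pow_three_mul_exp_neg_mul_le hc (Nat.cast_nonneg M)

theorem eventually_besselApprox_sampledExp_of_mem_Ioo (hab : a ≤ b) {η : ℝ}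
    (hη : η ∈ Ioo 0 (1 / 2)) :
    ∃ C : ℝ≥0, ∃ c > 0, ∀ᶠ M : ℕ in atTop, ∃ V : Submodule ℂ (Fin M → ℂ),
      (finrank ℂ V : ℝ) ≤ ((1 + η) * (b - a + 2 * η) + η) * M ∧
      BesselApprox (sampledExp M) V (C * ENNReal.ofReal (Real.exp (-c * M)))
        (volume.restrict (Icc a b)) := by
  obtain ⟨hη0, hη1⟩ := hη
  have hcos : 0 < Real.cos (π * η) :=
    Real.cos_pos_of_mem_Ioo ⟨by nlinarith [pi_pos], by nlinarith [pi_pos]⟩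
  obtain ⟨C, c, hc, hdecay⟩ := exists_mul_sq_le_exp_neg hη0 hcos
    (Real.cos_zero ▸ Real.cos_lt_cos_of_nonneg_of_le_pi le_rfl (by nlinarith [pi_pos])
      (by positivity))
  refine ⟨C * (b - a).toNNReal, c, hc, ?_⟩
  filter_upwards [eventually_ge_atTop ⌈η⁻¹⌉₊] with M hM
  have hηM : 1 ≤ η * M := by
    rw [← mul_inv_cancel₀ hη0.ne']
    gcongr
    exact Nat.ceil_le.1 hM
  have : 0 ≤ b - a + 2 * η := by linarith
  have hL := Nat.floor_le (zero_le_one.trans hηM)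
  obtain ⟨V, hV, happrox⟩ := exists_besselApprox_sampledExp M ⌊η * M⌋₊ hab ⟨hη0.le, hη1.le⟩
  refine ⟨V, hV.trans ?_, happrox.mono ?_⟩
  · calc (M + ⌊η * M⌋₊ : ℝ) * (b - a + 2 * η) + 1
      _ ≤ (M + η * M) * (b - a + 2 * η) + η * M := by gcongr
      _ = ((1 + η) * (b - a + 2 * η) + η) * M := by ring
  · rw [ENNReal.coe_mul, mul_right_comm (C : ℝ≥0∞)]
    refine mul_le_mul' ?_ le_rfl
    calc (M : ℝ≥0∞) * ENNReal.ofReal ((M + ⌊η * M⌋₊) * Real.cos (π * η) ^ ⌊η * M⌋₊) ^ 2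
      _ = ENNReal.ofReal (M * ((M + ⌊η * M⌋₊) * Real.cos (π * η) ^ ⌊η * M⌋₊) ^ 2) := by
        rw [ENNReal.ofReal_mul M.cast_nonneg, ENNReal.ofReal_natCast,
          ENNReal.ofReal_pow (by positivity)]
      _ ≤ ENNReal.ofReal (C * Real.exp (-c * M)) := ENNReal.ofReal_le_ofReal (hdecay M)
      _ = C * ENNReal.ofReal (Real.exp (-c * M)) := by
        rw [ENNReal.ofReal_mul C.coe_nonneg, ENNReal.ofReal_coe_nnreal]

theorem eventually_besselApprox_sampledExp (hab : a ≤ b) (hs : b - a < s) :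
    ∃ C : ℝ≥0, ∃ c > 0, ∀ᶠ M : ℕ in atTop, ∃ V : Submodule ℂ (Fin M → ℂ),
      (finrank ℂ V : ℝ) ≤ s * M ∧
      BesselApprox (sampledExp M) V (C * ENNReal.ofReal (Real.exp (-c * M)))
        (volume.restrict (Icc a b)) := by
  have hlim : Tendsto (fun η : ℝ => (1 + η) * (b - a + 2 * η) + η) (𝓝[>] 0) (𝓝 (b - a)) :=
    tendsto_nhdsWithin_of_tendsto_nhds <| Continuous.tendsto' (by fun_prop) _ _ (by simp)
  obtain ⟨η, hηs, hη⟩ :=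
    ((hlim.eventually_lt_const hs).and (Ioo_mem_nhdsGT (show (0 : ℝ) < 1 / 2 by norm_num))).exists
  obtain ⟨C, c, hc, h⟩ := eventually_besselApprox_sampledExp_of_mem_Ioo hab hη
  refine ⟨C, c, hc, h.mono fun M ⟨V, hV, happrox⟩ => ⟨V, hV.trans ?_, happrox⟩⟩
  gcongr

theorem ofReal_exp_neg_mul_le {c d x y : ℝ} (hd : 0 ≤ d) (hx : 0 ≤ x) (hcd : c ≤ d) (hxy : x ≤ y) :
    ENNReal.ofReal (Real.exp (-d * y)) ≤ ENNReal.ofReal (Real.exp (-c * x)) := by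
  refine ENNReal.ofReal_le_ofReal (Real.exp_le_exp.2 ?_)
  rw [neg_mul, neg_mul, neg_le_neg_iff]
  gcongr

theorem eventually_besselApprox_vecTensor_sampledExp {a' b' s' : ℝ} (hab : a ≤ b)
    (hs : b - a < s) (hab' : a' ≤ b') (hs' : b' - a' < s') :
    ∃ C : ℝ≥0, ∃ c > 0, ∀ᶠ K : ℕ × ℕ in atTop, ∃ V : Submodule ℂ (Fin K.1 × Fin K.2 → ℂ),
      (finrank ℂ V : ℝ) ≤ s * s' * (K.1 * K.2) ∧
      BesselApprox (fun x : ℝ × ℝ => vecTensor (sampledExp K.1 x.1) (sampledExp K.2 x.2)) V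
        (C * ENNReal.ofReal (Real.exp (-c * min (K.1 : ℝ) K.2)))
        (volume.restrict (Icc a b ×ˢ Icc a' b')) := by
  obtain ⟨C, c, hc, h⟩ := eventually_besselApprox_sampledExp hab hs
  obtain ⟨C', c', hc', h'⟩ := eventually_besselApprox_sampledExp hab' hs'
  refine ⟨2 * (C * ⌈b' - a'⌉₊ + 2 * (C + ⌈b - a⌉₊) * C'), min c c', lt_min hc hc', ?_⟩
  rw [← prod_atTop_atTop_eq]
  filter_upwards [h.prod_mk h'] with ⟨M, N⟩ ⟨⟨V, hV, hA⟩, ⟨W, hW, hB⟩⟩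
  let E : ℝ≥0∞ := ENNReal.ofReal (Real.exp (-min c c' * min (M : ℝ) N))
  have hE : ENNReal.ofReal (Real.exp (-c * M)) ≤ E :=
    ofReal_exp_neg_mul_le hc.le (by positivity) (min_le_left _ _) (min_le_left _ _)
  have hE' : ENNReal.ofReal (Real.exp (-c' * N)) ≤ E :=
    ofReal_exp_neg_mul_le hc'.le (by positivity) (min_le_right _ _) (min_le_right _ _)
  have hE₁ : ENNReal.ofReal (Real.exp (-c * M)) ≤ 1 := by
    rw [ENNReal.ofReal_le_one, Real.exp_le_one_iff, neg_mul, neg_nonpos]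
    positivity
  refine ⟨Submodule.map₂ vecTensor V W, ?_, ?_⟩
  · calc (finrank ℂ (Submodule.map₂ vecTensor V W) : ℝ) ≤ finrank ℂ V * finrank ℂ W := by
          exact_mod_cast finrank_map₂_le _ V W
      _ ≤ (s * M) * (s' * N) := by
        gcongr
        exact (Nat.cast_nonneg _).trans hV
      _ = s * s' * (M * N) := by ring
  · rw [Measure.volume_eq_prod, ← Measure.prod_restrict]
    have := BesselApprox.tensor (continuous_sampledExp M).measurable
      (continuous_sampledExp N).measurable (hasBesselBound_sampledExp_Icc a b)
      (hasBesselBound_sampledExp_Icc a' b') hA hB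
    refine this.mono ?_
    calc 2 * (C * ENNReal.ofReal (Real.exp (-c * M)) * ⌈b' - a'⌉₊ +
          2 * (C * ENNReal.ofReal (Real.exp (-c * M)) + ⌈b - a⌉₊) *
            (C' * ENNReal.ofReal (Real.exp (-c' * N))))
      _ ≤ 2 * (C * E * ⌈b' - a'⌉₊ + 2 * (C * 1 + ⌈b - a⌉₊) * (C' * E)) := by
        gcongr
      _ = _ := by push_cast; ring

end Asymptotics

section Prolate

open Filter Topology Module

variable {M N : ℕ} {𝕎 : Set (ℝ × ℝ)} {ι : Type*} [Fintype ι] {W0 W1 : ι → ℝ} {τ : ℝ}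

theorem prolate2D_eq_of_integral (M N : ℕ) (𝕎 : Set (ℝ × ℝ)) :
    prolate2D M N 𝕎 = Matrix.of fun i j => ∫ x in 𝕎,
      vecTensor (sampledExp M x.1) (sampledExp N x.2) i *
        star (vecTensor (sampledExp M x.1) (sampledExp N x.2) j) := by
  ext i j
  refine integral_congr_ae (.of_forall fun x => ?_)
  simp only [vecTensor_apply, sampledExp, Real.fourierChar_apply, ← Complex.exp_nat_mul,
    Complex.star_def, ← Complex.exp_conj, ← Complex.exp_add]
  congr 1
  simp only [map_add, map_mul, Complex.conj_I, Complex.conj_ofReal, map_natCast]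
  push_cast
  ring

theorem re_star_dotProduct_prolate2D_mulVec_le (h𝕎 : volume 𝕎 ≠ ∞) {B : ℝ} (hB : 0 ≤ B)
    {v : Fin M × Fin N → ℂ}
    (h : ∫⁻ x in 𝕎, ‖star v ⬝ᵥ vecTensor (sampledExp M x.1) (sampledExp N x.2)‖ₑ ^ 2 ≤
      ENNReal.ofReal B * ∑ i, ‖star v i‖ₑ ^ 2) :
    RCLike.re (star v ⬝ᵥ prolate2D M N 𝕎 *ᵥ v) ≤ B * ∑ i, ‖v i‖ ^ 2 := by
  have : IsFiniteMeasure (volume.restrict 𝕎) := ⟨by simpa using h𝕎.lt_top⟩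
  have hα (i : Fin M × Fin N) : MemLp (fun x : ℝ × ℝ =>
      vecTensor (sampledExp M x.1) (sampledExp N x.2) i) 2 (volume.restrict 𝕎) := by
    have hM := continuous_sampledExp M
    have hN := continuous_sampledExp N
    refine .of_bound (Continuous.aestronglyMeasurable ?_) 1 (.of_forall fun x => ?_)
    · simp only [vecTensor_apply]; fun_prop
    · simp [norm_sampledExp]
  rw [prolate2D_eq_of_integral, star_dotProduct_integral_mulVec hα, RCLike.ofReal_re]
  simpa using integral_norm_sq_le_of_lintegral_enorm_sq_le hB h

theorem volume_iUnion_rect2_ne_top {ι : Type*} [Finite ι] (f0 f1 W0 W1 : ι → ℝ) :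
    volume (⋃ i, rect2 (f0 i) (f1 i) (W0 i) (W1 i)) ≠ ∞ :=
  (isCompact_iUnion fun _ => isCompact_Icc.prod isCompact_Icc).measure_ne_top

theorem exists_pos_sum_add_mul_add_lt (hτ : ∑ i, 4 * W0 i * W1 i < τ) :
    ∃ η > 0, ∑ i, (2 * W0 i + η) * (2 * W1 i + η) < τ := by
  have hlim : Tendsto (fun η : ℝ => ∑ i, (2 * W0 i + η) * (2 * W1 i + η)) (𝓝[>] 0)
      (𝓝 (∑ i, 4 * W0 i * W1 i)) :=
    tendsto_nhdsWithin_of_tendsto_nhds <| Continuous.tendsto' (by fun_prop) _ _ <|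
      Finset.sum_congr rfl fun i _ => by ring
  exact (eventually_mem_nhdsWithin.and (hlim.eventually_lt_const hτ)).exists

theorem eventually_lintegral_iUnion_rect2_le (f0 f1 : ι → ℝ) (hW0 : ∀ i, 0 ≤ W0 i)
    (hW1 : ∀ i, 0 ≤ W1 i) (hτ : ∑ i, 4 * W0 i * W1 i < τ) :
    ∃ C : ℝ≥0, ∃ c > 0, ∀ᶠ K : ℕ × ℕ in atTop, ∃ V : Submodule ℂ (Fin K.1 × Fin K.2 → ℂ),
      (finrank ℂ V : ℝ) ≤ τ * (K.1 * K.2) ∧ ∀ v : Fin K.1 × Fin K.2 → ℂ, (∀ u ∈ V, v ⬝ᵥ u = 0) →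
        ∫⁻ x in ⋃ i, rect2 (f0 i) (f1 i) (W0 i) (W1 i),
            ‖v ⬝ᵥ vecTensor (sampledExp K.1 x.1) (sampledExp K.2 x.2)‖ₑ ^ 2 ≤
          C * ENNReal.ofReal (Real.exp (-c * min (K.1 : ℝ) K.2)) * ∑ i, ‖v i‖ₑ ^ 2 := by
  obtain ⟨η, hη, hητ⟩ := exists_pos_sum_add_mul_add_lt hτ
  have hrect (i : ι) := eventually_besselApprox_vecTensor_sampledExp
    (a := f0 i - W0 i) (b := f0 i + W0 i) (s := 2 * W0 i + η) (by linarith [hW0 i]) (by linarith)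
    (a' := f1 i - W1 i) (b' := f1 i + W1 i) (s' := 2 * W1 i + η) (by linarith [hW1 i])
    (by linarith)
  choose C c hc h using hrect
  obtain ⟨c₀, hc₀, hle⟩ : ∃ c₀ > 0, ∀ i, c₀ ≤ c i :=
    ((eventually_mem_nhdsWithin (s := Ioi 0) (a := 0)).and <| eventually_all.2 fun i =>
      eventually_nhdsWithin_of_eventually_nhds (eventually_le_nhds (hc i))).exists
  refine ⟨∑ i, C i, c₀, hc₀, (eventually_all.2 h).mono fun K hK => ?_⟩
  choose V hV happrox using hK
  refine ⟨⨆ i, V i, ?_, fun v hv => ?_⟩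
  · calc (finrank ℂ (⨆ i, V i : Submodule ℂ (Fin K.1 × Fin K.2 → ℂ)) : ℝ)
      _ ≤ ∑ i, (finrank ℂ (V i) : ℝ) := by exact_mod_cast finrank_iSup_le_sum V
      _ ≤ ∑ i, (2 * W0 i + η) * (2 * W1 i + η) * (K.1 * K.2) := Finset.sum_le_sum fun i _ => hV i
      _ = (∑ i, (2 * W0 i + η) * (2 * W1 i + η)) * (K.1 * K.2) := (Finset.sum_mul ..).symm
      _ ≤ τ * (K.1 * K.2) := by gcongr
  · refine (lintegral_iUnion_le _ _).trans ?_
    rw [tsum_fintype, ENNReal.ofNNReal_finsetSum, Finset.sum_mul, Finset.sum_mul]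
    refine Finset.sum_le_sum fun i _ => ?_
    refine ((happrox i).mono (mul_le_mul' le_rfl ?_)).lintegral_enorm_dotProduct_sq_le
      fun u hu => hv u (Submodule.mem_iSup_of_mem i hu)
    exact ofReal_exp_neg_mul_le (hc i).le (le_min (Nat.cast_nonneg _) (Nat.cast_nonneg _)) (hle i)
      le_rfl

end Prolate

theorem cubic_multiband_cluster_near_zero_general {ι : Type*} [Fintype ι] (f0 f1 : ι → ℝ)
    {W0 W1 : ι → ℝ} (hW0 : ∀ i, 0 ≤ W0 i) (hW1 : ∀ i, 0 ≤ W1 i) {τ : ℝ}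
    (hτ : ∑ i, 4 * W0 i * W1 i < τ) :
    ∃ (C c : ℝ) (M₀ N₀ : ℕ), 0 < C ∧ 0 < c ∧ 1 ≤ M₀ ∧ 1 ≤ N₀ ∧
      ∀ (M N : ℕ), M₀ ≤ M → N₀ ≤ N →
        ∀ (hA : (prolate2D M N (⋃ i, rect2 (f0 i) (f1 i) (W0 i) (W1 i))).IsHermitian)
          (μ : Fin (M * N) → ℝ), Antitone μ →
          (∃ e : (Fin M × Fin N) ≃ Fin (M * N), hA.eigenvalues = μ ∘ e) →
          ∀ p : Fin (M * N), ⌈(M : ℝ) * (N : ℝ) * τ⌉₊ ≤ (p : ℕ) →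
            μ p ≤ C * Real.exp (-c * min (M : ℝ) (N : ℝ)) := by
  obtain ⟨C, c, hc, h⟩ := eventually_lintegral_iUnion_rect2_le f0 f1 hW0 hW1 hτ
  obtain ⟨⟨M₀, N₀⟩, h⟩ := Filter.eventually_atTop.1 h
  refine ⟨C + 1, c, M₀ + 1, N₀ + 1, by positivity, hc, by omega, by omega,
    fun M N hM hN hA μ hμ ⟨e, he⟩ p hp => ?_⟩
  obtain ⟨V, hV, hle⟩ := h (M, N) ⟨by grind, by grind⟩
  have hVp : Module.finrank ℂ V ≤ p := by
    refine le_trans ?_ hp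
    exact_mod_cast (hV.trans_eq (mul_comm _ _)).trans (Nat.le_ceil _)
  refine (antitone_eigenvalue_le_of_quadForm_le hA V (B := C * Real.exp (-c * min (M : ℝ) N))
    (fun v hv => ?_) hμ e he hVp).trans (by gcongr; simp)
  refine re_star_dotProduct_prolate2D_mulVec_le (volume_iUnion_rect2_ne_top _ _ _ _)
    (by positivity) ?_
  rw [ENNReal.ofReal_mul C.coe_nonneg, ENNReal.ofReal_coe_nnreal]
  exact hle _ hv

theorem cubic_multiband_cluster_near_zero
    (J : ℕ) (hJ : 1 ≤ J) (f0 f1 W0 W1 : Fin J → ℝ)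
    (hW0 : ∀ i, W0 i ∈ Set.Ioo (0 : ℝ) (1 / 2)) (hW1 : ∀ i, W1 i ∈ Set.Ioo (0 : ℝ) (1 / 2))
    (hsub : ∀ i, rect2 (f0 i) (f1 i) (W0 i) (W1 i) ⊆
      Set.Icc (-(1 / 2) : ℝ) (1 / 2) ×ˢ Set.Icc (-(1 / 2) : ℝ) (1 / 2))
    (hdisj : ∀ i j, i ≠ j →
      Disjoint (rect2 (f0 i) (f1 i) (W0 i) (W1 i)) (rect2 (f0 j) (f1 j) (W0 j) (W1 j)))
    (ε : ℝ) (hε : ε ∈ Set.Ioo (0 : ℝ) (1 / (∑ i, 4 * W0 i * W1 i) - 1)) :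
    ∃ (Ctil₃ Ctil₄ : ℝ) (Mtil₂ Ntil₂ : ℕ), 0 < Ctil₃ ∧ 0 < Ctil₄ ∧ 1 ≤ Mtil₂ ∧ 1 ≤ Ntil₂ ∧
      ∀ (M N : ℕ), Mtil₂ ≤ M → Ntil₂ ≤ N →
        ∀ (hA : (prolate2D M N (⋃ i, rect2 (f0 i) (f1 i) (W0 i) (W1 i))).IsHermitian)
          (μ : Fin (M * N) → ℝ), Antitone μ →
          (∃ e : (Fin M × Fin N) ≃ Fin (M * N), hA.eigenvalues = μ ∘ e) →
          ∀ p : Fin (M * N),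
            ⌈(M : ℝ) * (N : ℝ) * (∑ i, 4 * W0 i * W1 i) * (1 + ε)⌉₊ ≤ (p : ℕ) →
            μ p ≤ Ctil₃ * Real.exp (-Ctil₄ * min (M : ℝ) (N : ℝ)) := by
  have hsum : 0 < ∑ i, 4 * W0 i * W1 i :=
    Finset.sum_pos (fun i _ => mul_pos (mul_pos four_pos (hW0 i).1) (hW1 i).1)
      ⟨⟨0, hJ⟩, Finset.mem_univ _⟩
  simpa only [← mul_assoc] using cubic_multiband_cluster_near_zero_general f0 f1
    (fun i => (hW0 i).1.le) (fun i => (hW1 i).1.le)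
    (lt_mul_of_one_lt_right hsum (lt_add_of_pos_right 1 hε.1))
end

section
/- Let 𝕎 = ⋃_{i=0}^{J−1} 𝕎_i ⊆ [−1/2, 1/2]² be a cubic multiband set consisting of J ≥ 1 pairwise disjoint closed rectangles, with total Lebesgue measure ‖𝕎‖, and fix ε ∈ (0, 1). Then there exist constants C₅ > 0, c > 0 and integers M̃₁, Ñ₁ ≥ 1 (depending only on 𝕎 and ε) such that for all M ≥ M̃₁, N ≥ Ñ₁ and every index p ∈ {0, …, MN−1} with p ≤ J − 1 + ⌊MN·‖𝕎‖·(1−ε)⌋, the p-th eigenvalue satisfies λ_{(M,N),𝕎}^{(p)} ≥ 1 − 6·M²·N²·C₅·e^{−c·min(M,N)}. -/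
open MeasureTheory Matrix Real Set

/-!
The quadratic form of the prolate matrix of a set `S` at `x` is the integral over `S` of `‖X‖ ^ 2`,
where `X` is the trigonometric polynomial with coefficients `x`, and over the whole unit square this
integral is `‖x‖ ^ 2`. So by the min-max principle it suffices to find a space of dimension more
than `p` on which `X` is exponentially small off `S`.

Oversampling provides it. On a grid of `P × Q = (M + K) × (N + K)` frequencies `X` is recovered from
its samples by the Dirichlet kernel damped by `((1 + e^{2πit}) / 2) ^ K`, whose modulus is
`cos (π ‖t‖) ^ K`, with `‖t‖` the distance from `t` to `ℤ`. If `X` vanishes at every grid point at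
distance less than `θ` from the complement of `S`, it is therefore of size `cos (π θ) ^ K` off `S`.
These conditions number `P * Q` minus the number of grid points in the rectangles shrunk by `θ`,
that is about `P * Q * (1 - ‖S‖)`. With `K ≈ θ * min M N` and `θ` small, the oversampling and the
margin together cost less than the fraction `ε` of `M * N * ‖S‖`.
-/

open scoped FourierTransform Kronecker

section Rayleigh

variable {𝕜 ι κ : Type*} [RCLike 𝕜] [Fintype ι] [Fintype κ]

lemma star_dotProduct_self_eq_sum_norm_sq (x : ι → 𝕜) :
    star x ⬝ᵥ x = ((∑ i, ‖x i‖ ^ 2 : ℝ) : 𝕜) := by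
  simp [dotProduct, RCLike.conj_mul]

lemma sum_norm_sq_mulVec_of_conjTranspose_mul_self [DecidableEq ι] {E : Matrix κ ι 𝕜} {c : ℝ}
    (hE : Eᴴ * E = (c : 𝕜) • 1) (x : ι → 𝕜) :
    ∑ q, ‖(E *ᵥ x) q‖ ^ 2 = c * ∑ i, ‖x i‖ ^ 2 := by
  have h : star (E *ᵥ x) ⬝ᵥ (E *ᵥ x) = (c : 𝕜) * (star x ⬝ᵥ x) := by
    rw [star_mulVec, ← dotProduct_mulVec, mulVec_mulVec, hE, smul_mulVec, one_mulVec,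
      dotProduct_smul, smul_eq_mul]
  rw [star_dotProduct_self_eq_sum_norm_sq, star_dotProduct_self_eq_sum_norm_sq] at h
  exact_mod_cast h

lemma norm_sum_mul_sq_le_of_forall_ne_zero {w y : κ → 𝕜} {δ : ℝ}
    (h : ∀ q, y q ≠ 0 → ‖w q‖ ≤ δ) :
    ‖∑ q, w q * y q‖ ^ 2 ≤ δ ^ 2 * (Fintype.card κ * ∑ q, ‖y q‖ ^ 2) := by
  have hterm (q : κ) : ‖w q * y q‖ ≤ δ * ‖y q‖ := by
    rcases eq_or_ne (y q) 0 with hq | hq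
    · simp [hq]
    · rw [norm_mul]
      exact mul_le_mul_of_nonneg_right (h q hq) (norm_nonneg _)
  calc ‖∑ q, w q * y q‖ ^ 2 ≤ (δ * ∑ q, ‖y q‖) ^ 2 := by
        gcongr
        rw [Finset.mul_sum]
        exact norm_sum_le_of_le _ fun q _ => hterm q
    _ ≤ δ ^ 2 * (Fintype.card κ * ∑ q, ‖y q‖ ^ 2) := by
        rw [mul_pow]
        gcongr
        exact sq_sum_le_card_mul_sum_sq

lemma card_le_finrank_ker_add_card {R m n : Type*} [Field R] [Finite m] [Fintype n]
    (E : Matrix m n R) :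
    Nat.card n ≤ Module.finrank R (LinearMap.ker E.mulVecLin) + Nat.card m := by
  have := Fintype.ofFinite m
  have hrank := LinearMap.finrank_range_add_finrank_ker E.mulVecLin
  have hrange := Submodule.finrank_le (LinearMap.range E.mulVecLin)
  rw [Module.finrank_fintype_fun_eq_card, ← Nat.card_eq_fintype_card] at hrank hrange
  omega

variable [DecidableEq ι] {A : Matrix ι ι 𝕜}

lemma re_star_dotProduct_mulVec_eq_sum_eigenvalues (hA : A.IsHermitian) (x : ι → 𝕜) :
    RCLike.re (star x ⬝ᵥ (A *ᵥ x)) =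
      ∑ i, hA.eigenvalues i *
        ‖((star (hA.eigenvectorUnitary : Matrix ι ι 𝕜)) *ᵥ x) i‖ ^ 2 := by
  set U : Matrix ι ι 𝕜 := ↑hA.eigenvectorUnitary
  have hdiag : A = U * diagonal (fun i => (hA.eigenvalues i : 𝕜)) * star U := hA.spectral_theorem
  have hstar : star (star U *ᵥ x) = star x ᵥ* U := by
    rw [star_mulVec, star_eq_conjTranspose, conjTranspose_conjTranspose]
  have hform : star x ⬝ᵥ (A *ᵥ x) =
      star (star U *ᵥ x) ⬝ᵥ (diagonal (fun i => (hA.eigenvalues i : 𝕜)) *ᵥ (star U *ᵥ x)) := by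
    conv_lhs => rw [hdiag]
    rw [hstar, ← mulVec_mulVec, ← mulVec_mulVec, ← dotProduct_mulVec]
  rw [hform, dotProduct, map_sum]
  refine Finset.sum_congr rfl fun i _ => ?_
  rw [mulVec_diagonal, Pi.star_apply, mul_left_comm, RCLike.star_def, RCLike.conj_mul]
  norm_cast

lemma sum_norm_sq_star_eigenvectorUnitary_mulVec (hA : A.IsHermitian) (x : ι → 𝕜) :
    ∑ i, ‖((star (hA.eigenvectorUnitary : Matrix ι ι 𝕜)) *ᵥ x) i‖ ^ 2 = ∑ i, ‖x i‖ ^ 2 := by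
  rw [← one_mul (∑ i, ‖x i‖ ^ 2)]
  refine sum_norm_sq_mulVec_of_conjTranspose_mul_self ?_ x
  rw [star_eq_conjTranspose, conjTranspose_conjTranspose, RCLike.ofReal_one, one_smul]
  exact Unitary.coe_mul_star_self hA.eigenvectorUnitary

/-- The easy half of the Courant–Fischer min-max principle. -/
lemma le_eigenvalue_of_lt_finrank (hA : A.IsHermitian) {n : ℕ} {μ : Fin n → ℝ} (hμ : Antitone μ)
    (e : ι ≃ Fin n) (he : hA.eigenvalues = μ ∘ e) {p : Fin n} {a : ℝ} (V : Submodule 𝕜 (ι → 𝕜))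
    (hV : p < Module.finrank 𝕜 V)
    (h : ∀ x ∈ V, a * ∑ i, ‖x i‖ ^ 2 ≤ RCLike.re (star x ⬝ᵥ (A *ᵥ x))) : a ≤ μ p := by
  set U : Matrix ι ι 𝕜 := ↑hA.eigenvectorUnitary with hU
  let topCoords : V →ₗ[𝕜] Fin p → 𝕜 :=
    (LinearMap.funLeft 𝕜 𝕜 fun t : Fin p => e.symm (t.castLE p.2.le)) ∘ₗ
      (star U).mulVecLin ∘ₗ V.subtype
  obtain ⟨⟨x, hxV⟩, hx, hx0⟩ := Submodule.exists_mem_ne_zero_of_ne_bot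
    (LinearMap.ker_ne_bot_of_finrank_lt (f := topCoords) (by simpa using hV))
  have hcoord (i : ι) (hi : e i < p) : (star U *ᵥ x) i = 0 := by
    simpa [topCoords] using congrFun (LinearMap.mem_ker.mp hx) ⟨e i, hi⟩
  have hupper : RCLike.re (star x ⬝ᵥ (A *ᵥ x)) ≤ μ p * ∑ i, ‖x i‖ ^ 2 := by
    rw [re_star_dotProduct_mulVec_eq_sum_eigenvalues hA,
      ← sum_norm_sq_star_eigenvectorUnitary_mulVec hA, Finset.mul_sum]
    refine Finset.sum_le_sum fun i _ => ?_
    rcases lt_or_ge (e i) p with hi | hi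
    · simp [← hU, hcoord i hi]
    · rw [he]
      exact mul_le_mul_of_nonneg_right (hμ hi) (by positivity)
  have hpos : 0 < ∑ i, ‖x i‖ ^ 2 := by
    obtain ⟨i, hi⟩ := Function.ne_iff.mp fun h0 : x = 0 => hx0 (Subtype.ext h0)
    exact Finset.sum_pos' (fun _ _ => by positivity)
      ⟨i, Finset.mem_univ _, pow_pos (norm_pos_iff.mpr hi) 2⟩
  exact le_of_mul_le_mul_right ((h x hxV).trans hupper) hpos

end Rayleigh

section Sampling

/-- The `k`-th node of the uniform grid of `P` frequencies in `[-1/2, 1/2)`. -/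
noncomputable def gridPoint (P : ℕ) (k : Fin P) : ℝ := k / P - 1 / 2

/-- The Dirichlet kernel of order `P`, normalised so that it interpolates on the grid
`gridPoint P`. -/
noncomputable def dirichletKernel (P : ℕ) (t : ℝ) : ℂ := (∑ j : Fin P, (𝐞 (-(t * j)) : ℂ)) / P

/-- The Dirichlet kernel damped by `K` factors `(1 + e^{2πit}) / 2`. Each factor costs one degree
of the polynomials that are interpolated exactly, and buys geometric decay away from `t = 0`. -/
noncomputable def samplingKernel (P K : ℕ) (t : ℝ) : ℂ :=
  ((1 + (𝐞 t : ℂ)) / 2) ^ K * dirichletKernel P t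

/-- The `P`-point discrete Fourier transform on the grid `gridPoint P`, restricted to vectors of
length `M`. -/
noncomputable def gridMatrix (P M : ℕ) : Matrix (Fin P) (Fin M) ℂ :=
  of fun k m => (𝐞 (-(gridPoint P k * m)) : ℂ)

lemma fourierChar_eq_one_iff {t : ℝ} : 𝐞 t = 1 ↔ ∃ n : ℤ, t = n := by
  rw [← Circle.coe_eq_one, fourierChar_apply, Complex.exp_eq_one_iff]
  refine exists_congr fun n => ?_
  rw [← mul_assoc, mul_left_inj' Complex.I_ne_zero]
  norm_cast
  rw [mul_comm (n : ℝ), mul_right_inj' (by positivity)]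

lemma fourierChar_natCast_mul (n : ℕ) (t : ℝ) : 𝐞 (n * t) = 𝐞 t ^ n := by
  rw [← nsmul_eq_mul, AddChar.map_nsmul_eq_pow]

lemma coe_fourierChar_add (s t : ℝ) : (𝐞 (s + t) : ℂ) = 𝐞 s * 𝐞 t := by
  rw [AddChar.map_add_eq_mul, Circle.coe_mul]

lemma star_coe_fourierChar (t : ℝ) : star (𝐞 t : ℂ) = 𝐞 (-t) := by
  rw [AddChar.map_neg_eq_inv, Circle.coe_inv_eq_conj]
  rfl

lemma sum_fourierChar_mul_gridPoint {P : ℕ} {n : ℤ} (hn : |n| < P) :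
    ∑ k : Fin P, (𝐞 (n * gridPoint P k) : ℂ) = if n = 0 then (P : ℂ) else 0 := by
  split_ifs with h0
  · simp [h0]
  have hP : (P : ℝ) ≠ 0 := by
    have : (0 : ℤ) < P := (abs_nonneg n).trans_lt hn
    exact_mod_cast this.ne'
  set ζ := 𝐞 (n / P) with hζ
  have hζP : ζ ^ P = 1 := by
    rw [hζ, ← fourierChar_natCast_mul, fourierChar_eq_one_iff]
    exact ⟨n, by field_simp⟩
  have hζ1 : ζ ≠ 1 := by
    rw [hζ, Ne, fourierChar_eq_one_iff]
    rintro ⟨m, hm⟩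
    have hnm : n = P * m := by
      rw [div_eq_iff hP, mul_comm] at hm
      exact_mod_cast hm
    exact h0 (Int.eq_zero_of_abs_lt_dvd ⟨m, hnm⟩ hn)
  have hterm (k : Fin P) : (𝐞 (n * gridPoint P k) : ℂ) = 𝐞 (-(n / 2)) * (ζ : ℂ) ^ (k : ℕ) := by
    rw [hζ, ← Circle.coe_pow, ← fourierChar_natCast_mul, ← coe_fourierChar_add, gridPoint]
    congr 2
    ring
  rw [Finset.sum_congr rfl fun k _ => hterm k, ← Finset.mul_sum,
    Fin.sum_univ_eq_sum_range fun k => (ζ : ℂ) ^ k,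
    geom_sum_eq (by rwa [Ne, Circle.coe_eq_one]), ← Circle.coe_pow, hζP]
  simp

lemma conjTranspose_gridMatrix_mul_self {M P : ℕ} (h : M ≤ P) :
    (gridMatrix P M)ᴴ * gridMatrix P M = (P : ℂ) • 1 := by
  ext a b
  have hab : |(a : ℤ) - b| < P := by rw [abs_lt]; omega
  have hterm (k : Fin P) : (gridMatrix P M)ᴴ a k * gridMatrix P M k b =
      𝐞 (((a : ℤ) - b : ℤ) * gridPoint P k) := by
    rw [conjTranspose_apply, gridMatrix, of_apply, of_apply, star_coe_fourierChar,
      ← coe_fourierChar_add]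
    push_cast
    congr 2
    ring
  rw [mul_apply, Finset.sum_congr rfl fun k _ => hterm k, sum_fourierChar_mul_gridPoint hab,
    Matrix.smul_apply, one_apply]
  simp [sub_eq_zero, Fin.ext_iff]

lemma sum_dirichletKernel_mul {P m : ℕ} (hm : m < P) (x : ℝ) :
    ∑ k, dirichletKernel P (x - gridPoint P k) * (𝐞 (-(gridPoint P k * m)) : ℂ) =
      𝐞 (-(x * m)) := by
  have hP : (P : ℂ) ≠ 0 := Nat.cast_ne_zero.mpr (Nat.ne_zero_of_lt hm)
  have hterm (k j : Fin P) :
      (𝐞 (-((x - gridPoint P k) * j)) : ℂ) / P * 𝐞 (-(gridPoint P k * m)) =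
        𝐞 (-(x * j)) / P * 𝐞 (((j : ℤ) - m : ℤ) * gridPoint P k) := by
    rw [div_mul_eq_mul_div, div_mul_eq_mul_div, ← coe_fourierChar_add, ← coe_fourierChar_add]
    push_cast
    congr 3
    ring
  have hsum (j : Fin P) : ∑ k, (𝐞 (((j : ℤ) - m : ℤ) * gridPoint P k) : ℂ) =
      if j = ⟨m, hm⟩ then (P : ℂ) else 0 := by
    rw [sum_fourierChar_mul_gridPoint (by rw [abs_lt]; omega)]
    simp [sub_eq_zero, Fin.ext_iff]
  simp_rw [dirichletKernel, Finset.sum_div, Finset.sum_mul, hterm]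
  rw [Finset.sum_comm]
  simp_rw [← Finset.mul_sum, hsum]
  simp [hP]

lemma sum_samplingKernel_mul {P K m : ℕ} (hm : m + K < P) (x : ℝ) :
    ∑ k, samplingKernel P K (x - gridPoint P k) * (𝐞 (-(gridPoint P k * m)) : ℂ) =
      𝐞 (-(x * m)) := by
  have hterm (k : Fin P) :
      samplingKernel P K (x - gridPoint P k) * (𝐞 (-(gridPoint P k * m)) : ℂ) =
        ∑ s ∈ Finset.range (K + 1), (K.choose s : ℂ) / 2 ^ K * 𝐞 (x * s) *
          (dirichletKernel P (x - gridPoint P k) * 𝐞 (-(gridPoint P k * (m + s : ℕ)))) := by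
    rw [samplingKernel, div_pow, add_comm 1, add_pow, Finset.sum_div, Finset.sum_mul,
      Finset.sum_mul]
    refine Finset.sum_congr rfl fun s _ => ?_
    have hexp : ((𝐞 (x - gridPoint P k) : ℂ)) ^ s * 𝐞 (-(gridPoint P k * m)) =
        𝐞 (x * s) * 𝐞 (-(gridPoint P k * (m + s : ℕ))) := by
      rw [← Circle.coe_pow, ← fourierChar_natCast_mul, ← coe_fourierChar_add,
        ← coe_fourierChar_add]
      push_cast
      congr 2
      ring
    rw [one_pow, mul_one]
    linear_combination ((K.choose s : ℂ) / 2 ^ K * dirichletKernel P (x - gridPoint P k)) * hexp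
  have hinterp (s : ℕ) (hs : s ∈ Finset.range (K + 1)) :
      ∑ k, (K.choose s : ℂ) / 2 ^ K * 𝐞 (x * s) *
          (dirichletKernel P (x - gridPoint P k) * 𝐞 (-(gridPoint P k * (m + s : ℕ)))) =
        (K.choose s : ℂ) / 2 ^ K * 𝐞 (-(x * m)) := by
    rw [Finset.mem_range] at hs
    rw [← Finset.mul_sum, sum_dirichletKernel_mul (by omega), mul_assoc, ← coe_fourierChar_add]
    push_cast
    congr 3
    ring
  have hchoose : ∑ s ∈ Finset.range (K + 1), (K.choose s : ℂ) = 2 ^ K := by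
    exact_mod_cast Nat.sum_range_choose K
  rw [Finset.sum_congr rfl fun k _ => hterm k, Finset.sum_comm, Finset.sum_congr rfl hinterp,
    ← Finset.sum_mul, ← Finset.sum_div, hchoose, div_self (pow_ne_zero _ two_ne_zero), one_mul]

lemma norm_dirichletKernel_le_one (P : ℕ) (t : ℝ) : ‖dirichletKernel P t‖ ≤ 1 := by
  rw [dirichletKernel, norm_div, Complex.norm_natCast]
  refine div_le_one_of_le₀ ?_ (Nat.cast_nonneg P)
  exact (norm_sum_le_of_le _ fun _ _ => (Circle.norm_coe _).le).trans_eq (by simp)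

lemma abs_cos_pi_mul (t : ℝ) : |cos (π * t)| = cos (π * ‖(t : UnitAddCircle)‖) := by
  have hcos : cos (π * (t - round t)) = (-1) ^ round t * cos (π * t) := by
    rw [mul_sub, mul_comm π (round t : ℝ), cos_sub_int_mul_pi]
  have hround := abs_sub_round t
  have hnonneg : 0 ≤ cos (π * |t - round t|) :=
    cos_nonneg_of_mem_Icc ⟨by nlinarith [pi_pos, abs_nonneg (t - round t)], by nlinarith [pi_pos]⟩
  rw [UnitAddCircle.norm_eq, ← abs_of_nonneg hnonneg, ← abs_of_pos pi_pos, ← abs_mul, cos_abs,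
    abs_of_pos pi_pos, hcos, abs_mul, abs_neg_one_zpow, one_mul]

lemma norm_one_add_fourierChar_div_two (t : ℝ) :
    ‖(1 + (𝐞 t : ℂ)) / 2‖ = cos (π * ‖(t : UnitAddCircle)‖) := by
  have hfactor : (1 + (𝐞 t : ℂ)) / 2 = 𝐞 (t / 2) * ((cos (π * t) : ℝ) : ℂ) := by
    have hsplit : (𝐞 t : ℂ) = 𝐞 (t / 2) * 𝐞 (t / 2) := by
      rw [← coe_fourierChar_add, add_halves]
    have hinv : (1 : ℂ) = 𝐞 (t / 2) * 𝐞 (-(t / 2)) := by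
      rw [← coe_fourierChar_add, add_neg_cancel, AddChar.map_zero_eq_one, Circle.coe_one]
    have hcos : ((cos (π * t) : ℝ) : ℂ) = (𝐞 (t / 2) + 𝐞 (-(t / 2))) / 2 := by
      rw [Complex.ofReal_cos, Complex.cos, fourierChar_apply, fourierChar_apply]
      push_cast
      ring_nf
    rw [hcos]
    linear_combination (hinv + hsplit) / 2
  rw [hfactor, norm_mul, Circle.norm_coe, one_mul, Complex.norm_real, Real.norm_eq_abs,
    abs_cos_pi_mul]

lemma norm_samplingKernel_le (P K : ℕ) (t : ℝ) :
    ‖samplingKernel P K t‖ ≤ cos (π * ‖(t : UnitAddCircle)‖) ^ K := by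
  rw [samplingKernel, norm_mul, norm_pow, ← norm_one_add_fourierChar_div_two]
  exact mul_le_of_le_one_right (by positivity) (norm_dirichletKernel_le_one P t)

lemma norm_samplingKernel_le_one (P K : ℕ) (t : ℝ) : ‖samplingKernel P K t‖ ≤ 1 := by
  refine (norm_samplingKernel_le P K t).trans (pow_le_one₀ ?_ (cos_le_one _))
  rw [← abs_cos_pi_mul]
  exact abs_nonneg _

lemma norm_samplingKernel_le_of_le (P K : ℕ) {r t : ℝ} (hr : 0 ≤ r)
    (ht : r ≤ ‖(t : UnitAddCircle)‖) : ‖samplingKernel P K t‖ ≤ cos (π * r) ^ K := by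
  refine (norm_samplingKernel_le P K t).trans (pow_le_pow_left₀ ?_ ?_ K)
  · rw [← abs_cos_pi_mul]
    exact abs_nonneg _
  · have hhalf : ‖(t : UnitAddCircle)‖ ≤ 1 / 2 := by
      rw [UnitAddCircle.norm_eq]
      exact abs_sub_round t
    refine cos_le_cos_of_nonneg_of_le_pi (by positivity) ?_ (by gcongr)
    nlinarith [pi_pos]

end Sampling

section QuadraticForm

/-- The fundamental domain `[-1/2, 1/2]²` of the frequency torus. -/
def unitSquare : Set (ℝ × ℝ) := Icc (-(1 / 2)) (1 / 2) ×ˢ Icc (-(1 / 2)) (1 / 2)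

/-- The row of exponentials `e^{-2πi (s.1 m + s.2 n)}`, `0 ≤ m < M`, `0 ≤ n < N`. -/
noncomputable def expMode (M N : ℕ) (s : ℝ × ℝ) (j : Fin M × Fin N) : ℂ :=
  𝐞 (-(s.1 * j.1)) * 𝐞 (-(s.2 * j.2))

/-- The trigonometric polynomial with coefficients `x`, i.e. its two-dimensional Fourier series. -/
noncomputable def trigPoly {M N : ℕ} (x : Fin M × Fin N → ℂ) (s : ℝ × ℝ) : ℂ :=
  expMode M N s ⬝ᵥ x

variable {M N : ℕ} {S : Set (ℝ × ℝ)}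

lemma isCompact_unitSquare : IsCompact unitSquare := isCompact_Icc.prod isCompact_Icc

lemma volume_unitSquare : volume unitSquare = 1 := by
  rw [unitSquare, Measure.volume_eq_prod, Measure.prod_prod]
  norm_num

lemma continuous_coe_fourierChar : Continuous fun t : ℝ => (𝐞 t : ℂ) :=
  continuous_induced_dom.comp continuous_fourierChar

lemma continuous_expMode (j : Fin M × Fin N) : Continuous fun s => expMode M N s j :=
  (continuous_coe_fourierChar.comp (by fun_prop)).mul
    (continuous_coe_fourierChar.comp (by fun_prop))

lemma continuous_trigPoly (x : Fin M × Fin N → ℂ) : Continuous (trigPoly x) :=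
  continuous_finsetSum _ fun j _ => (continuous_expMode j).mul continuous_const

lemma star_expMode_mul_expMode (s : ℝ × ℝ) (i j : Fin M × Fin N) :
    star (expMode M N s i) * expMode M N s j =
      𝐞 (s.1 * ((i.1 : ℤ) - j.1 : ℤ)) * 𝐞 (s.2 * ((i.2 : ℤ) - j.2 : ℤ)) := by
  rw [expMode, expMode, star_mul', star_coe_fourierChar, star_coe_fourierChar, mul_mul_mul_comm,
    ← coe_fourierChar_add, ← coe_fourierChar_add]
  push_cast
  congr 3 <;> ring

lemma prolate2D_apply (S : Set (ℝ × ℝ)) (i j : Fin M × Fin N) :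
    prolate2D M N S i j = ∫ s in S, star (expMode M N s i) * expMode M N s j := by
  refine integral_congr_ae (.of_forall fun s => ?_)
  simp only [star_expMode_mul_expMode, fourierChar_apply, ← Complex.exp_add]
  push_cast
  ring_nf

lemma setIntegral_fourierChar_mul_intCast (n : ℤ) :
    ∫ t in Icc (-(1 / 2) : ℝ) (1 / 2), (𝐞 (t * n) : ℂ) = if n = 0 then 1 else 0 := by
  split_ifs with hn
  · norm_num [hn]
  have hc : 2 * (π : ℂ) * Complex.I * n ≠ 0 :=
    mul_ne_zero Complex.two_pi_I_ne_zero (Int.cast_ne_zero.mpr hn)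
  have hexp (t : ℝ) : (𝐞 (t * n) : ℂ) = Complex.exp (2 * (π : ℂ) * Complex.I * n * t) := by
    rw [fourierChar_apply]
    push_cast
    ring_nf
  simp_rw [hexp]
  rw [integral_Icc_eq_integral_Ioc, ← intervalIntegral.integral_of_le (by norm_num),
    integral_exp_mul_complex hc, div_eq_zero_iff, sub_eq_zero, Complex.exp_eq_exp_iff_exists_int]
  exact .inl ⟨n, by push_cast; ring⟩

lemma prolate2D_unitSquare (M N : ℕ) : prolate2D M N unitSquare = 1 := by
  ext i j
  simp_rw [prolate2D_apply, star_expMode_mul_expMode]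
  rw [unitSquare, Measure.volume_eq_prod,
    setIntegral_prod_mul (fun t : ℝ => (𝐞 (t * ((i.1 : ℤ) - j.1 : ℤ)) : ℂ))
      (fun t : ℝ => (𝐞 (t * ((i.2 : ℤ) - j.2 : ℤ)) : ℂ)),
    setIntegral_fourierChar_mul_intCast, setIntegral_fourierChar_mul_intCast, one_apply,
    ite_zero_mul_ite_zero, one_mul]
  simp only [sub_eq_zero, Nat.cast_inj, ← Fin.ext_iff, ← Prod.ext_iff]

lemma star_dotProduct_prolate2D_mulVec (hS : S ⊆ unitSquare) (x : Fin M × Fin N → ℂ) :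
    star x ⬝ᵥ (prolate2D M N S *ᵥ x) = ((∫ s in S, ‖trigPoly x s‖ ^ 2 : ℝ) : ℂ) := by
  have hint {F : ℝ × ℝ → ℂ} (hF : Continuous F) : IntegrableOn F S :=
    (hF.continuousOn.integrableOn_compact isCompact_unitSquare).mono_set hS
  have hcont (i j : Fin M × Fin N) : Continuous fun s =>
      star (x i) * (star (expMode M N s i) * expMode M N s j * x j) :=
    continuous_const.mul (((continuous_expMode i).star.mul (continuous_expMode j)).mul
      continuous_const)
  have hexpand (s : ℝ × ℝ) : ((‖trigPoly x s‖ ^ 2 : ℝ) : ℂ) =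
      ∑ i, ∑ j, star (x i) * (star (expMode M N s i) * expMode M N s j * x j) := by
    rw [Complex.ofReal_pow, ← Complex.conj_mul', ← RCLike.star_def, trigPoly, dotProduct,
      star_sum, Finset.sum_mul_sum]
    refine Finset.sum_congr rfl fun i _ => Finset.sum_congr rfl fun j _ => ?_
    rw [star_mul']
    ring
  rw [← integral_complex_ofReal]
  simp_rw [hexpand]
  rw [integral_finsetSum _ fun i _ => hint (continuous_finsetSum _ fun j _ => hcont i j)]
  refine Finset.sum_congr rfl fun i _ => ?_
  rw [integral_finsetSum _ fun j _ => hint (hcont i j), mulVec, dotProduct, Finset.mul_sum]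
  refine Finset.sum_congr rfl fun j _ => ?_
  rw [integral_const_mul, integral_mul_const, prolate2D_apply, Pi.star_apply]

lemma setIntegral_norm_trigPoly_sq (x : Fin M × Fin N → ℂ) :
    ∫ s in unitSquare, ‖trigPoly x s‖ ^ 2 = ∑ j, ‖x j‖ ^ 2 := by
  have h := star_dotProduct_prolate2D_mulVec subset_rfl x
  rw [prolate2D_unitSquare, one_mulVec, star_dotProduct_self_eq_sum_norm_sq] at h
  exact Complex.ofReal_injective h.symm

lemma sub_le_re_star_dotProduct_prolate2D_mulVec (hS : S ⊆ unitSquare) (hSm : MeasurableSet S)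
    (x : Fin M × Fin N → ℂ) {D : ℝ} (hD0 : 0 ≤ D)
    (hD : ∀ s ∈ unitSquare \ S, ‖trigPoly x s‖ ^ 2 ≤ D) :
    ∑ j, ‖x j‖ ^ 2 - D ≤ (star x ⬝ᵥ (prolate2D M N S *ᵥ x)).re := by
  have hint : IntegrableOn (fun s => ‖trigPoly x s‖ ^ 2) unitSquare :=
    ((continuous_trigPoly x).norm.pow 2).continuousOn.integrableOn_compact isCompact_unitSquare
  have hvol : volume (unitSquare \ S) ≤ 1 :=
    (measure_mono sdiff_subset).trans volume_unitSquare.le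
  have houtside : ∫ s in unitSquare \ S, ‖trigPoly x s‖ ^ 2 ≤ D :=
    calc ∫ s in unitSquare \ S, ‖trigPoly x s‖ ^ 2
        ≤ ‖∫ s in unitSquare \ S, ‖trigPoly x s‖ ^ 2‖ := le_norm_self _
      _ ≤ D * volume.real (unitSquare \ S) :=
          norm_setIntegral_le_of_norm_le_const (hvol.trans_lt ENNReal.one_lt_top) fun s hs => by
            rw [Real.norm_of_nonneg (by positivity)]
            exact hD s hs
      _ ≤ D := mul_le_of_le_one_right hD0 (ENNReal.toReal_mono ENNReal.one_ne_top hvol)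
  rw [star_dotProduct_prolate2D_mulVec hS, Complex.ofReal_re, ← setIntegral_norm_trigPoly_sq]
  linarith [setIntegral_sdiff hSm hint hS]

end QuadraticForm

section Oversampling

/-- The distance between `s` and `q` in the frequency torus `ℝ² / ℤ²`, for the maximum norm. -/
noncomputable def torusDist (s q : ℝ × ℝ) : ℝ :=
  max ‖((s.1 - q.1 : ℝ) : UnitAddCircle)‖ ‖((s.2 - q.2 : ℝ) : UnitAddCircle)‖

/-- The points whose torus distance to the complement of `S` is at least `r`. -/
def periodicErosion (S : Set (ℝ × ℝ)) (r : ℝ) : Set (ℝ × ℝ) :=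
  {q | ∀ s ∈ unitSquare \ S, r ≤ torusDist s q}

/-- The nodes of the `P × Q` product grid of frequencies. -/
noncomputable def gridPoint2 (P Q : ℕ) (q : Fin P × Fin Q) : ℝ × ℝ :=
  (gridPoint P q.1, gridPoint Q q.2)

/-- The samples on the `P × Q` grid of the trigonometric polynomial with given coefficients. -/
noncomputable def gridMatrix2 (M N P Q : ℕ) : Matrix (Fin P × Fin Q) (Fin M × Fin N) ℂ :=
  gridMatrix P M ⊗ₖ gridMatrix Q N

/-- The interpolation weights which recover the value at `s` from the samples on the `P × Q` grid,
with damping of order `K` in each variable. -/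
noncomputable def samplingKernel2 (P Q K : ℕ) (s : ℝ × ℝ) (q : Fin P × Fin Q) : ℂ :=
  samplingKernel P K (s.1 - gridPoint P q.1) * samplingKernel Q K (s.2 - gridPoint Q q.2)

variable {M N P Q K : ℕ} {S : Set (ℝ × ℝ)} {r : ℝ}

lemma sum_norm_sq_gridMatrix2_mulVec (hMP : M ≤ P) (hNQ : N ≤ Q) (x : Fin M × Fin N → ℂ) :
    ∑ q, ‖(gridMatrix2 M N P Q *ᵥ x) q‖ ^ 2 = P * Q * ∑ j, ‖x j‖ ^ 2 := by
  refine sum_norm_sq_mulVec_of_conjTranspose_mul_self ?_ x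
  rw [gridMatrix2, conjTranspose_kronecker, ← mul_kronecker_mul,
    conjTranspose_gridMatrix_mul_self hMP, conjTranspose_gridMatrix_mul_self hNQ,
    smul_kronecker, kronecker_smul, one_kronecker_one, smul_smul]
  simp

lemma trigPoly_eq_sum_samplingKernel2_mul (hP : M + K ≤ P) (hQ : N + K ≤ Q)
    (x : Fin M × Fin N → ℂ) (s : ℝ × ℝ) :
    trigPoly x s = ∑ q, samplingKernel2 P Q K s q * (gridMatrix2 M N P Q *ᵥ x) q := by
  have hmode (j : Fin M × Fin N) :
      ∑ q, samplingKernel2 P Q K s q * gridMatrix2 M N P Q q j = expMode M N s j := by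
    rw [expMode, ← sum_samplingKernel_mul (P := P) (K := K) (by omega),
      ← sum_samplingKernel_mul (P := Q) (K := K) (by omega), Finset.sum_mul_sum,
      Fintype.sum_prod_type]
    refine Finset.sum_congr rfl fun k _ => Finset.sum_congr rfl fun l _ => ?_
    exact mul_mul_mul_comm _ _ _ _
  change expMode M N s ⬝ᵥ x = samplingKernel2 P Q K s ⬝ᵥ (gridMatrix2 M N P Q *ᵥ x)
  rw [dotProduct_mulVec]
  exact congrArg (· ⬝ᵥ x) (funext fun j => (hmode j).symm)

lemma norm_samplingKernel2_le (hr : 0 ≤ r) {s : ℝ × ℝ} {q : Fin P × Fin Q}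
    (h : r ≤ torusDist s (gridPoint2 P Q q)) :
    ‖samplingKernel2 P Q K s q‖ ≤ cos (π * r) ^ K := by
  rw [samplingKernel2, norm_mul]
  rcases le_max_iff.mp h with h | h
  · exact (mul_le_of_le_one_right (norm_nonneg _) (norm_samplingKernel_le_one ..)).trans
      (norm_samplingKernel_le_of_le P K hr h)
  · exact (mul_le_of_le_one_left (norm_nonneg _) (norm_samplingKernel_le_one ..)).trans
      (norm_samplingKernel_le_of_le Q K hr h)

lemma norm_trigPoly_sq_le_of_forall_notMem_periodicErosion (hP : M + K ≤ P) (hQ : N + K ≤ Q)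
    (hr : 0 ≤ r) {x : Fin M × Fin N → ℂ}
    (hx : ∀ q, gridPoint2 P Q q ∉ periodicErosion S r → (gridMatrix2 M N P Q *ᵥ x) q = 0)
    {s : ℝ × ℝ} (hs : s ∈ unitSquare \ S) :
    ‖trigPoly x s‖ ^ 2 ≤ ((P * Q : ℝ) * cos (π * r) ^ K) ^ 2 * ∑ j, ‖x j‖ ^ 2 := by
  rw [trigPoly_eq_sum_samplingKernel2_mul hP hQ]
  refine (norm_sum_mul_sq_le_of_forall_ne_zero fun q hq =>
    norm_samplingKernel2_le hr (not_imp_comm.mp (hx q) hq s hs)).trans_eq ?_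
  rw [sum_norm_sq_gridMatrix2_mulVec (by omega) (by omega)]
  simp only [Fintype.card_prod, Fintype.card_fin]
  push_cast
  ring

theorem one_sub_le_eigenvalue_prolate2D (hS : S ⊆ unitSquare) (hSm : MeasurableSet S)
    (hr : 0 ≤ r) (hP : M + K ≤ P) (hQ : N + K ≤ Q)
    (hA : (prolate2D M N S).IsHermitian) {μ : Fin (M * N) → ℝ} (hμ : Antitone μ)
    (e : Fin M × Fin N ≃ Fin (M * N)) (he : hA.eigenvalues = μ ∘ e) {p : Fin (M * N)}
    (hp : P * Q + p < M * N + (gridPoint2 P Q ⁻¹' periodicErosion S r).ncard) :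
    1 - ((P * Q : ℝ) * cos (π * r) ^ K) ^ 2 ≤ μ p := by
  set good : Set (Fin P × Fin Q) := gridPoint2 P Q ⁻¹' periodicErosion S r
  let E : Matrix ↥goodᶜ (Fin M × Fin N) ℂ := (gridMatrix2 M N P Q).submatrix (↑) id
  have hdim : p < Module.finrank ℂ (LinearMap.ker E.mulVecLin) := by
    have hker := card_le_finrank_ker_add_card E
    have hcompl := ncard_add_ncard_compl good
    simp only [Nat.card_prod, Nat.card_fin, Nat.card_coe_set_eq] at hker hcompl
    omega
  refine le_eigenvalue_of_lt_finrank hA hμ e he _ hdim fun x hx => ?_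
  have hvanish (q) (hq : gridPoint2 P Q q ∉ periodicErosion S r) :
      (gridMatrix2 M N P Q *ᵥ x) q = 0 :=
    congrFun (LinearMap.mem_ker.mp hx) ⟨q, hq⟩
  rw [sub_mul, one_mul]
  exact sub_le_re_star_dotProduct_prolate2D_mulVec hS hSm x (by positivity) fun s =>
    norm_trigPoly_sq_le_of_forall_notMem_periodicErosion hP hQ hr hvanish

end Oversampling

section Counting

variable {P Q : ℕ} {S : Set (ℝ × ℝ)} {r f f0 f1 W W0 W1 : ℝ}

lemma rect2_subset_unitSquare_iff (h0 : 0 ≤ W0) (h1 : 0 ≤ W1) :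
    rect2 f0 f1 W0 W1 ⊆ unitSquare ↔
      (-(1 / 2) ≤ f0 - W0 ∧ f0 + W0 ≤ 1 / 2) ∧ -(1 / 2) ≤ f1 - W1 ∧ f1 + W1 ≤ 1 / 2 := by
  have hne : (rect2 f0 f1 W0 W1).Nonempty :=
    (nonempty_Icc.mpr (by linarith)).prod (nonempty_Icc.mpr (by linarith))
  rw [unitSquare, rect2, prod_subset_prod_iff' hne, Icc_subset_Icc_iff (by linarith),
    Icc_subset_Icc_iff (by linarith)]

lemma le_norm_coe_of_le_abs {t : ℝ} (h : r ≤ |t|) (h' : |t| ≤ 1 - r) :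
    r ≤ ‖(t : UnitAddCircle)‖ := by
  rw [UnitAddCircle.norm_eq]
  rcases eq_or_ne (round t) 0 with h0 | h0
  · simpa [h0] using h
  · have hone : (1 : ℝ) ≤ |(round t : ℝ)| := by exact_mod_cast Int.one_le_abs h0
    have htri := abs_sub_abs_le_abs_sub (round t : ℝ) t
    rw [abs_sub_comm] at htri
    linarith

lemma le_norm_coe_sub_of_mem_Icc_of_notMem_Icc {s q : ℝ} (hl : -(1 / 2) ≤ f - W)
    (hu : f + W ≤ 1 / 2) (hq : q ∈ Icc (f - (W - r)) (f + (W - r)))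
    (hs : s ∈ Icc (-(1 / 2)) (1 / 2)) (hs' : s ∉ Icc (f - W) (f + W)) :
    r ≤ ‖((s - q : ℝ) : UnitAddCircle)‖ := by
  obtain ⟨hs1, hs2⟩ := hs
  obtain ⟨hq1, hq2⟩ := hq
  refine le_norm_coe_of_le_abs ?_ (abs_le.mpr ⟨by linarith, by linarith⟩)
  rw [mem_Icc, not_and_or, not_le, not_le] at hs'
  rcases hs' with h | h
  · exact le_abs.mpr (.inr (by linarith))
  · exact le_abs.mpr (.inl (by linarith))

lemma rect2_sub_subset_periodicErosion (h0 : 0 ≤ W0) (h1 : 0 ≤ W1)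
    (hsub : rect2 f0 f1 W0 W1 ⊆ unitSquare) (hS : rect2 f0 f1 W0 W1 ⊆ S) :
    rect2 f0 f1 (W0 - r) (W1 - r) ⊆ periodicErosion S r := by
  obtain ⟨⟨hl0, hu0⟩, hl1, hu1⟩ := (rect2_subset_unitSquare_iff h0 h1).mp hsub
  rintro q ⟨hq0, hq1⟩ s ⟨⟨hs0, hs1⟩, hsS⟩
  by_cases hs : s.1 ∈ Icc (f0 - W0) (f0 + W0)
  · have hs' : s.2 ∉ Icc (f1 - W1) (f1 + W1) := fun h => hsS (hS ⟨hs, h⟩)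
    exact le_max_of_le_right (le_norm_coe_sub_of_mem_Icc_of_notMem_Icc hl1 hu1 hq1 hs1 hs')
  · exact le_max_of_le_left (le_norm_coe_sub_of_mem_Icc_of_notMem_Icc hl0 hu0 hq0 hs0 hs)

lemma le_ncard_gridPoint_preimage_Icc {a b : ℝ} (ha : -(1 / 2) ≤ a) (hb : b < 1 / 2) :
    P * (b - a) - 1 ≤ ((gridPoint P ⁻¹' Icc a b).ncard : ℝ) := by
  rcases le_or_gt (P * (b - a)) 1 with h | h
  · linarith [Nat.cast_nonneg (α := ℝ) (gridPoint P ⁻¹' Icc a b).ncard]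
  have hP : (0 : ℝ) < P := Nat.cast_pos.mpr (Nat.pos_of_ne_zero (by rintro rfl; norm_num at h))
  have hab : a < b := by nlinarith
  have hA : 0 ≤ P * (a + 1 / 2) := mul_nonneg hP.le (by linarith)
  have hB : 0 ≤ P * (b + 1 / 2) := mul_nonneg hP.le (by linarith)
  have hsub : Icc ⌈P * (a + 1 / 2)⌉₊ ⌊P * (b + 1 / 2)⌋₊ ⊆
      Fin.val '' (gridPoint P ⁻¹' Icc a b) := by
    rintro k ⟨hk1, hk2⟩
    rw [Nat.ceil_le, ← le_div_iff₀' hP] at hk1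
    rw [Nat.le_floor_iff hB, ← div_le_iff₀' hP] at hk2
    have hkP : k < P := by
      have : (k : ℝ) / P < 1 := by linarith
      rw [div_lt_one hP] at this
      exact_mod_cast this
    exact ⟨⟨k, hkP⟩, ⟨le_sub_iff_add_le.mpr hk1, sub_le_iff_le_add.mpr hk2⟩, rfl⟩
  have hcard := ncard_le_ncard hsub (toFinite _)
  rw [ncard_Icc_nat, ncard_image_of_injective _ Fin.val_injective, tsub_le_iff_right] at hcard
  have hcard' : (⌊P * (b + 1 / 2)⌋₊ + 1 : ℝ) ≤
      (gridPoint P ⁻¹' Icc a b).ncard + ⌈P * (a + 1 / 2)⌉₊ := by exact_mod_cast hcard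
  linarith [Nat.ceil_lt_add_one hA, Nat.lt_floor_add_one (P * (b + 1 / 2) : ℝ)]

lemma mul_sub_mul_sub_mul_le_mul {a b α β c d : ℝ} (ha : 0 ≤ a) (hb : 0 ≤ b) (hα : 0 ≤ α)
    (hβ : 0 ≤ β) (hc : 0 ≤ c) (hd : 0 ≤ d) (hac : a - α ≤ c) (hbd : b - β ≤ d) :
    a * b - α * b - β * a ≤ c * d := by
  rcases le_or_gt a α with h | _
  · nlinarith [mul_nonneg (sub_nonneg.mpr h) hb, mul_nonneg hβ ha, mul_nonneg hc hd]
  rcases le_or_gt b β with h' | _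
  · nlinarith [mul_nonneg (sub_nonneg.mpr h') ha, mul_nonneg hα hb, mul_nonneg hc hd]
  · nlinarith [mul_le_mul hac hbd (by linarith) hc, mul_nonneg hα hβ]

lemma le_ncard_gridPoint2_preimage_rect2 (hr : 0 < r) (h0 : 0 ≤ W0) (h1 : 0 ≤ W1)
    (hsub : rect2 f0 f1 W0 W1 ⊆ unitSquare) :
    P * Q * (4 * W0 * W1) - (4 * r * (P * Q) + P + Q) ≤
      ((gridPoint2 P Q ⁻¹' rect2 f0 f1 (W0 - r) (W1 - r)).ncard : ℝ) := by
  obtain ⟨⟨hl0, hu0⟩, hl1, hu1⟩ := (rect2_subset_unitSquare_iff h0 h1).mp hsub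
  have hP := le_ncard_gridPoint_preimage_Icc (P := P) (a := f0 - (W0 - r)) (b := f0 + (W0 - r))
    (by linarith) (by linarith)
  have hQ := le_ncard_gridPoint_preimage_Icc (P := Q) (a := f1 - (W1 - r)) (b := f1 + (W1 - r))
    (by linarith) (by linarith)
  have hprod : gridPoint2 P Q ⁻¹' rect2 f0 f1 (W0 - r) (W1 - r) =
      (gridPoint P ⁻¹' Icc (f0 - (W0 - r)) (f0 + (W0 - r))) ×ˢ
        (gridPoint Q ⁻¹' Icc (f1 - (W1 - r)) (f1 + (W1 - r))) := rfl
  rw [hprod, ncard_prod, Nat.cast_mul]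
  refine le_trans ?_ (mul_sub_mul_sub_mul_le_mul (a := 2 * W0 * P) (b := 2 * W1 * Q)
    (α := 2 * r * P + 1) (β := 2 * r * Q + 1) (by positivity) (by positivity) (by positivity)
    (by positivity) (by positivity) (by positivity) (by linarith) (by linarith))
  have hW0 : (2 * r * Q + 1) * P * (2 * W0) ≤ (2 * r * Q + 1) * P :=
    mul_le_of_le_one_right (by positivity) (by linarith)
  have hW1 : (2 * r * P + 1) * Q * (2 * W1) ≤ (2 * r * P + 1) * Q :=
    mul_le_of_le_one_right (by positivity) (by linarith)
  linarith

lemma le_ncard_gridPoint2_preimage_periodicErosion_iUnion {ι : Type*} [Fintype ι]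
    {f0 f1 W0 W1 : ι → ℝ} (hr : 0 < r) (h0 : ∀ i, 0 ≤ W0 i) (h1 : ∀ i, 0 ≤ W1 i)
    (hsub : ∀ i, rect2 (f0 i) (f1 i) (W0 i) (W1 i) ⊆ unitSquare)
    (hdisj : Pairwise fun i j =>
      Disjoint (rect2 (f0 i) (f1 i) (W0 i) (W1 i)) (rect2 (f0 j) (f1 j) (W0 j) (W1 j))) :
    P * Q * (∑ i, 4 * W0 i * W1 i) - Fintype.card ι * (4 * r * (P * Q) + P + Q) ≤
      ((gridPoint2 P Q ⁻¹'
        periodicErosion (⋃ i, rect2 (f0 i) (f1 i) (W0 i) (W1 i)) r).ncard : ℝ) := by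
  set R := fun i => gridPoint2 P Q ⁻¹' rect2 (f0 i) (f1 i) (W0 i - r) (W1 i - r)
  have hshrink (i : ι) :
      rect2 (f0 i) (f1 i) (W0 i - r) (W1 i - r) ⊆ rect2 (f0 i) (f1 i) (W0 i) (W1 i) :=
    prod_mono (Icc_subset_Icc (by linarith) (by linarith))
      (Icc_subset_Icc (by linarith) (by linarith))
  have hRdisj : Pairwise (Function.onFun Disjoint R) := fun i j hij =>
    ((hdisj hij).mono (hshrink i) (hshrink j)).preimage _
  have hRsub : ⋃ i, R i ⊆
      gridPoint2 P Q ⁻¹' periodicErosion (⋃ i, rect2 (f0 i) (f1 i) (W0 i) (W1 i)) r :=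
    iUnion_subset fun i => preimage_mono <| rect2_sub_subset_periodicErosion (h0 i) (h1 i) (hsub i)
      (subset_iUnion (fun i => rect2 (f0 i) (f1 i) (W0 i) (W1 i)) i)
  calc P * Q * (∑ i, 4 * W0 i * W1 i) - Fintype.card ι * (4 * r * (P * Q) + P + Q)
      = ∑ i, (P * Q * (4 * W0 i * W1 i) - (4 * r * (P * Q) + P + Q)) := by
        simp only [Finset.sum_sub_distrib, Finset.mul_sum, Finset.sum_const, Finset.card_univ,
          nsmul_eq_mul]
    _ ≤ ∑ i, ((R i).ncard : ℝ) := Finset.sum_le_sum fun i _ =>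
        le_ncard_gridPoint2_preimage_rect2 hr (h0 i) (h1 i) (hsub i)
    _ = (⋃ i, R i).ncard := by
        rw [ncard_iUnion_of_finite (fun _ => toFinite _) hRdisj, finsum_eq_sum_of_fintype,
          Nat.cast_sum]
    _ ≤ _ := Nat.cast_le.mpr (ncard_le_ncard hRsub)

end Counting

section Constants

/-- On the right stands the bound of `le_ncard_gridPoint2_preimage_periodicErosion_iUnion`; the
oversampling cost `P * Q - M * N` and the boundary loss both have to be paid out of the fraction
`ε` of the time-frequency area `M * N * ω`. -/
lemma mul_add_le_mul_add_of_oversampling {J ω ε θ M N P Q : ℝ} (hJ : 0 ≤ J) (hω : 0 ≤ ω)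
    (hθ : 0 < θ) (hθ4 : θ ≤ 1 / 4) (hθε : (10 * J + 3) * θ ≤ ω * ε)
    (hM : 1 ≤ θ * M) (hN : 1 ≤ θ * N) (hMP : M ≤ P) (hPM : P ≤ (1 + θ) * M) (hNQ : N ≤ Q)
    (hQN : Q ≤ (1 + θ) * N) :
    P * Q + (J + M * N * ω * (1 - ε)) ≤ M * N + (P * Q * ω - J * (4 * θ * (P * Q) + P + Q)) := by
  have hM0 : 0 < M := pos_of_mul_pos_right (one_pos.trans_le hM) hθ.le
  have hN0 : 0 < N := pos_of_mul_pos_right (one_pos.trans_le hN) hθ.le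
  have hP0 := hM0.trans_le hMP
  have hQ0 := hN0.trans_le hNQ
  have hMN := mul_pos hM0 hN0
  have hlow : M * N ≤ P * Q := by gcongr
  have hupp : P * Q ≤ (1 + 9 / 4 * θ) * (M * N) :=
    calc P * Q ≤ (1 + θ) * M * ((1 + θ) * N) := by gcongr
      _ = (1 + (2 + θ) * θ) * (M * N) := by ring
      _ ≤ (1 + 9 / 4 * θ) * (M * N) := by gcongr; linarith
  have hP : P ≤ 5 / 4 * θ * (M * N) := by nlinarith
  have hQ : Q ≤ 5 / 4 * θ * (M * N) := by nlinarith
  have hone : 1 ≤ θ * (M * N) := by nlinarith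
  have hgrid : 4 * θ * (P * Q) ≤ 25 / 4 * θ * (M * N) := by nlinarith
  have hJcost : J * (1 + 4 * θ * (P * Q) + P + Q) ≤ J * (10 * θ * (M * N)) := by
    gcongr
    linarith
  have hgain : M * N * ω ≤ P * Q * ω := by gcongr
  have hbudget := mul_le_mul_of_nonneg_right hθε hMN.le
  nlinarith

lemma mul_add_lt_mul_add_ncard_periodicErosion {J M N K p : ℕ} {f0 f1 W0 W1 : Fin J → ℝ} {ε θ : ℝ}
    (hJ : 1 ≤ J) (h0 : ∀ i, 0 ≤ W0 i) (h1 : ∀ i, 0 ≤ W1 i)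
    (hsub : ∀ i, rect2 (f0 i) (f1 i) (W0 i) (W1 i) ⊆ unitSquare)
    (hdisj : Pairwise fun i j =>
      Disjoint (rect2 (f0 i) (f1 i) (W0 i) (W1 i)) (rect2 (f0 j) (f1 j) (W0 j) (W1 j)))
    (hε : ε ≤ 1) (hθ : 0 < θ) (hθ4 : θ ≤ 1 / 4)
    (hθε : (10 * J + 3) * θ ≤ (∑ i, 4 * W0 i * W1 i) * ε) (hM : 1 ≤ θ * M) (hN : 1 ≤ θ * N)
    (hKM : K ≤ θ * M) (hKN : K ≤ θ * N)
    (hp : p ≤ J - 1 + ⌊(M : ℝ) * N * (∑ i, 4 * W0 i * W1 i) * (1 - ε)⌋₊) :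
    (M + K) * (N + K) + p < M * N + (gridPoint2 (M + K) (N + K) ⁻¹'
      periodicErosion (⋃ i, rect2 (f0 i) (f1 i) (W0 i) (W1 i)) θ).ncard := by
  have hω : 0 ≤ ∑ i, 4 * W0 i * W1 i :=
    Finset.sum_nonneg fun i _ => mul_nonneg (mul_nonneg zero_le_four (h0 i)) (h1 i)
  have hp' : (p + 1 : ℝ) ≤ J + M * N * (∑ i, 4 * W0 i * W1 i) * (1 - ε) := by
    have hfloor : (⌊(M : ℝ) * N * (∑ i, 4 * W0 i * W1 i) * (1 - ε)⌋₊ : ℝ) ≤ _ :=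
      Nat.floor_le (mul_nonneg (by positivity) (by linarith))
    have hsucc : p + 1 ≤ J + ⌊(M : ℝ) * N * (∑ i, 4 * W0 i * W1 i) * (1 - ε)⌋₊ := by omega
    have hsucc' := Nat.cast_le (α := ℝ).mpr hsucc
    rw [Nat.cast_add, Nat.cast_add, Nat.cast_one] at hsucc'
    linarith
  have hcount := le_ncard_gridPoint2_preimage_periodicErosion_iUnion (P := M + K) (Q := N + K)
    hθ h0 h1 hsub hdisj
  have hcost := mul_add_le_mul_add_of_oversampling (P := M + K) (Q := N + K) J.cast_nonneg hω hθ
    hθ4 hθε hM hN (by simp) (by linarith) (by simp) (by linarith)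
  rw [← @Nat.cast_lt ℝ]
  rw [Fintype.card_fin] at hcount
  push_cast at hcount ⊢
  linarith

lemma pow_le_inv_mul_exp_log_mul {ρ x : ℝ} {n : ℕ} (hρ : 0 < ρ) (hρ1 : ρ ≤ 1) (hx : x ≤ n + 1) :
    ρ ^ n ≤ ρ⁻¹ * exp (log ρ * x) := by
  rw [le_inv_mul_iff₀ hρ, ← pow_succ', ← rpow_natCast, rpow_def_of_pos hρ]
  refine exp_le_exp.mpr (mul_le_mul_of_nonpos_left ?_ (log_nonpos hρ.le hρ1))
  exact_mod_cast hx

lemma sq_mul_pow_le_mul_exp {M N K x ρ θ : ℝ} {n : ℕ} (hM : 0 ≤ M) (hN : 0 ≤ N)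
    (hK : 0 ≤ K) (hKM : K ≤ M / 4) (hKN : K ≤ N / 4) (hρ : 0 < ρ) (hρ1 : ρ ≤ 1)
    (hx : θ * x ≤ n + 1) :
    ((M + K) * (N + K) * ρ ^ n) ^ 2 ≤
      6 * M ^ 2 * N ^ 2 * ρ⁻¹ ^ 2 * exp (-(-2 * θ * log ρ) * x) := by
  have hsize : (M + K) * (N + K) ≤ 2 * (M * N) :=
    calc (M + K) * (N + K) ≤ (5 / 4 * M) * (5 / 4 * N) := by gcongr <;> linarith
      _ ≤ 2 * (M * N) := by nlinarith [mul_nonneg hM hN]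
  have hexp : exp (-(-2 * θ * log ρ) * x) = exp (log ρ * (θ * x)) ^ 2 := by
    rw [← exp_nat_mul]
    push_cast
    ring_nf
  calc ((M + K) * (N + K) * ρ ^ n) ^ 2
      ≤ (2 * (M * N) * (ρ⁻¹ * exp (log ρ * (θ * x)))) ^ 2 := by
        gcongr
        exact pow_le_inv_mul_exp_log_mul hρ hρ1 hx
    _ = 4 * (M ^ 2 * N ^ 2 * ρ⁻¹ ^ 2 * exp (log ρ * (θ * x)) ^ 2) := by ring
    _ ≤ 6 * (M ^ 2 * N ^ 2 * ρ⁻¹ ^ 2 * exp (log ρ * (θ * x)) ^ 2) := by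
        gcongr
        norm_num
    _ = 6 * M ^ 2 * N ^ 2 * ρ⁻¹ ^ 2 * exp (-(-2 * θ * log ρ) * x) := by
        rw [hexp]
        ring

lemma exists_pos_le_mul_le {a b c : ℝ} (ha : 0 < a) (hb : 0 < b) (hc : 0 < c) :
    ∃ θ, 0 < θ ∧ θ ≤ b ∧ a * θ ≤ c :=
  ⟨min b (c / a), lt_min hb (div_pos hc ha), min_le_left _ _,
    (le_div_iff₀' ha).mp (min_le_right _ _)⟩

lemma cos_pi_mul_mem_Ioo {θ : ℝ} (h0 : 0 < θ) (h : θ < 1 / 2) : cos (π * θ) ∈ Ioo 0 1 := by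
  refine ⟨cos_pos_of_mem_Ioo ⟨by nlinarith [pi_pos], by nlinarith [pi_pos]⟩, ?_⟩
  rw [← cos_zero]
  exact cos_lt_cos_of_nonneg_of_le_pi le_rfl (by nlinarith [pi_pos]) (by positivity)

end Constants

theorem cubic_multiband_cluster_near_one
    (J : ℕ) (hJ : 1 ≤ J) (f0 f1 W0 W1 : Fin J → ℝ)
    (hW0 : ∀ i, W0 i ∈ Set.Ioo (0 : ℝ) (1 / 2)) (hW1 : ∀ i, W1 i ∈ Set.Ioo (0 : ℝ) (1 / 2))
    (hsub : ∀ i, rect2 (f0 i) (f1 i) (W0 i) (W1 i) ⊆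
      Set.Icc (-(1 / 2) : ℝ) (1 / 2) ×ˢ Set.Icc (-(1 / 2) : ℝ) (1 / 2))
    (hdisj : ∀ i j, i ≠ j →
      Disjoint (rect2 (f0 i) (f1 i) (W0 i) (W1 i)) (rect2 (f0 j) (f1 j) (W0 j) (W1 j)))
    (ε : ℝ) (hε : ε ∈ Set.Ioo (0 : ℝ) 1) :
    ∃ (C₅ c : ℝ) (Mtil₁ Ntil₁ : ℕ), 0 < C₅ ∧ 0 < c ∧ 1 ≤ Mtil₁ ∧ 1 ≤ Ntil₁ ∧
      ∀ (M N : ℕ), Mtil₁ ≤ M → Ntil₁ ≤ N →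
        ∀ (hA : (prolate2D M N (⋃ i, rect2 (f0 i) (f1 i) (W0 i) (W1 i))).IsHermitian)
          (μ : Fin (M * N) → ℝ), Antitone μ →
          (∃ e : (Fin M × Fin N) ≃ Fin (M * N), hA.eigenvalues = μ ∘ e) →
          ∀ p : Fin (M * N),
            (p : ℕ) ≤ J - 1 + ⌊(M : ℝ) * (N : ℝ) * (∑ i, 4 * W0 i * W1 i) * (1 - ε)⌋₊ →
            1 - 6 * (M : ℝ) ^ 2 * (N : ℝ) ^ 2 * C₅ * Real.exp (-c * min (M : ℝ) (N : ℝ))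
              ≤ μ p := by
  have hω : 0 < ∑ i, 4 * W0 i * W1 i := Finset.sum_pos
    (fun i _ => mul_pos (mul_pos four_pos (hW0 i).1) (hW1 i).1) ⟨⟨0, hJ⟩, Finset.mem_univ _⟩
  obtain ⟨θ, hθ0, hθ4, hθε⟩ := exists_pos_le_mul_le (a := 10 * J + 3) (b := 1 / 4)
    (by positivity) (by norm_num) (mul_pos hω hε.1)
  obtain ⟨hρ0, hρ1⟩ := cos_pi_mul_mem_Ioo hθ0 (hθ4.trans_lt (by norm_num))
  have hceil : 1 ≤ ⌈1 / θ⌉₊ := Nat.one_le_ceil_iff.mpr (by positivity)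
  refine ⟨(cos (π * θ))⁻¹ ^ 2, -2 * θ * log (cos (π * θ)), ⌈1 / θ⌉₊, ⌈1 / θ⌉₊, by positivity,
    mul_pos_of_neg_of_neg (by linarith) (log_neg hρ0 hρ1), hceil, hceil, ?_⟩
  rintro M N hM hN hA μ hμ ⟨e, he⟩ p hp
  rw [Nat.ceil_le, div_le_iff₀' hθ0] at hM hN
  set K := ⌊θ * min (M : ℝ) N⌋₊
  have hK : K ≤ θ * min (M : ℝ) N := Nat.floor_le (by positivity)
  have hKM : K ≤ θ * M := hK.trans (by gcongr; exact min_le_left _ _)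
  have hKN : K ≤ θ * N := hK.trans (by gcongr; exact min_le_right _ _)
  have hdim := mul_add_lt_mul_add_ncard_periodicErosion hJ (fun i => (hW0 i).1.le)
    (fun i => (hW1 i).1.le) hsub hdisj hε.2.le hθ0 hθ4 hθε hM hN hKM hKN hp
  have heig := one_sub_le_eigenvalue_prolate2D (iUnion_subset hsub)
    (.iUnion fun i => measurableSet_Icc.prod measurableSet_Icc) hθ0.le le_rfl le_rfl hA hμ e he hdim
  have hsmall := sq_mul_pow_le_mul_exp M.cast_nonneg N.cast_nonneg K.cast_nonneg
    (by nlinarith) (by nlinarith) hρ0 hρ1.le (Nat.lt_floor_add_one (θ * min (M : ℝ) N)).le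
  push_cast at heig
  linarith
end

section
/- Let [f₁ − W₁, f₁ + W₁] and [f₂ − W₂, f₂ + W₂] be two disjoint closed subintervals of [−1/2, 1/2] with W₁, W₂ ∈ (0, 1/2), and fix ε ∈ (0, 1). Then there exists an integer Ñ₁ ≥ 1 (depending only on the two intervals and ε) such that for every N ≥ Ñ₁ the following holds: if s₁ is a unit eigenvector of B_{N,[f₁−W₁,f₁+W₁]} corresponding to its l₁-th largest eigenvalue λ₁ with 0 ≤ l₁ ≤ ⌊2NW₁(1−ε)⌋ − 1, and s₂ is a unit eigenvector of B_{N,[f₂−W₂,f₂+W₂]} corresponding to its l₂-th largest eigenvalue λ₂ with 0 ≤ l₂ ≤ ⌊2NW₂(1−ε)⌋ − 1, then |⟨s₁, s₂⟩| ≤ 3·√(1 − min(λ₁, λ₂)). -/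
open MeasureTheory Matrix Real Set

/-- The 1-D prolate matrix `B_{N,𝕎}` with entries `∫_𝕎 exp(2πi f (m−n)) df`. -/
noncomputable def prolate1D (N : ℕ) (𝕎 : Set ℝ) : Matrix (Fin N) (Fin N) ℂ :=
  fun m n => ∫ f in 𝕎,
    Complex.exp (2 * (Real.pi : ℂ) * Complex.I * (f : ℂ) * (((m : ℕ) : ℂ) - ((n : ℕ) : ℂ)))

/-!
The prolate matrix of `𝕎` is the integral over `𝕎` of the positive rank-one matrices `e_f e_f*`,
where `e_f` is the sampled exponential of frequency `f`, and over a full period it is the identity.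
Hence disjoint windows inside one period give positive matrices `B₁`, `B₂` with `B₁ + B₂ ≤ 1`.
A unit eigenvector `sᵢ` of `Bᵢ` with eigenvalue `λᵢ` satisfies `λᵢ sᵢ sᵢ* ≤ Bᵢ`, so
`λ₁ s₁ s₁* + λ₂ s₂ s₂* ≤ 1`. Evaluating this on `s₁ + u s₂`, for the unimodular `u` that makes
`⟨s₁, u s₂⟩ = r := |⟨s₁, s₂⟩|`, gives `(λ₁ + λ₂)(1 + r) ≤ 2`, and since `r ≤ 1` this yields
`r ≤ (1 - λ₁) + (1 - λ₂)`, for every `N`.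
-/

open scoped InnerProductSpace ComplexOrder

section PositiveOperators

variable {𝕜 E : Type*} [RCLike 𝕜] [NormedAddCommGroup E] [InnerProductSpace 𝕜 E]

lemma mul_norm_inner_sq_le_re_inner_of_isPositive {T : E →ₗ[𝕜] E} (hT : T.IsPositive)
    {s : E} (hs : ‖s‖ = 1) {c : ℝ} (hTs : T s = (c : 𝕜) • s) (x : E) :
    c * ‖⟪s, x⟫_𝕜‖ ^ 2 ≤ RCLike.re ⟪T x, x⟫_𝕜 := by
  -- Positivity of `T` at the component `x - ⟪s, x⟫ • s` of `x` orthogonal to `s`.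
  set z := ⟪s, x⟫_𝕜
  have inner_Tx_s : ⟪T x, s⟫_𝕜 = c * star z := by
    rw [hT.isSymmetric x s, hTs, inner_smul_right, ← inner_conj_symm x s]
    rfl
  have inner_Ts_x : ⟪T s, x⟫_𝕜 = c * z := by
    rw [hTs, inner_smul_left, RCLike.conj_ofReal]
  have inner_Ts_s : ⟪T s, s⟫_𝕜 = c := by
    rw [hTs, inner_smul_left, RCLike.conj_ofReal, inner_self_eq_norm_sq_to_K, hs]
    simp
  have inner_residual : ⟪T (x - z • s), x - z • s⟫_𝕜 = ⟪T x, x⟫_𝕜 - ((c * ‖z‖ ^ 2 : ℝ) : 𝕜) := by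
    have star_mul_self : star z * z = (‖z‖ : 𝕜) ^ 2 := RCLike.conj_mul z
    simp only [map_sub, map_smul, inner_sub_left, inner_sub_right, inner_smul_left,
      inner_smul_right, inner_Tx_s, inner_Ts_x, inner_Ts_s, starRingEnd_apply]
    push_cast
    linear_combination (-(c : 𝕜)) * star_mul_self
  have := hT.re_inner_nonneg_left (x - z • s)
  rw [inner_residual, map_sub, RCLike.ofReal_re] at this
  linarith

lemma norm_inner_le_of_forall_mul_norm_inner_sq_add_le {s₁ s₂ : E} (hs₁ : ‖s₁‖ = 1)
    (hs₂ : ‖s₂‖ = 1) {c₁ c₂ : ℝ}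
    (h : ∀ x : E, c₁ * ‖⟪s₁, x⟫_𝕜‖ ^ 2 + c₂ * ‖⟪s₂, x⟫_𝕜‖ ^ 2 ≤ ‖x‖ ^ 2) :
    ‖⟪s₁, s₂⟫_𝕜‖ ≤ (1 - c₁) + (1 - c₂) := by
  obtain ⟨u, hu, hur⟩ := RCLike.exists_norm_eq_mul_self ⟪s₁, s₂⟫_𝕜
  set r := ‖⟪s₁, s₂⟫_𝕜‖
  have hr₀ : 0 ≤ r := norm_nonneg _
  have hr₁ : r ≤ 1 := by simpa [hs₁, hs₂] using norm_inner_le_norm (𝕜 := 𝕜) s₁ s₂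
  have hus₂ : ‖u • s₂‖ = 1 := by rw [norm_smul, hu, hs₂, one_mul]
  have inner_s₁ : ⟪s₁, u • s₂⟫_𝕜 = r := by rw [inner_smul_right, hur]
  have norm_one_add : ‖(1 + r : 𝕜)‖ = 1 + r := by
    rw [← RCLike.ofReal_one, ← RCLike.ofReal_add, RCLike.norm_of_nonneg (by positivity)]
  have norm_inner_left : ‖⟪s₁, s₁ + u • s₂⟫_𝕜‖ = 1 + r := by
    rw [inner_add_right, inner_s₁, inner_self_eq_norm_sq_to_K, hs₁, RCLike.ofReal_one, one_pow,
      norm_one_add]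
  have norm_inner_right : ‖⟪s₂, s₁ + u • s₂⟫_𝕜‖ = 1 + r := by
    have : ‖⟪u • s₂, s₁ + u • s₂⟫_𝕜‖ = 1 + r := by
      rw [inner_add_right, ← inner_conj_symm, inner_s₁, inner_self_eq_norm_sq_to_K, hus₂,
        RCLike.conj_ofReal, RCLike.ofReal_one, one_pow, add_comm, norm_one_add]
    rwa [inner_smul_left, norm_mul, RCLike.norm_conj, hu, one_mul] at this
  have norm_sq : ‖s₁ + u • s₂‖ ^ 2 = 2 * (1 + r) := by
    rw [norm_add_sq (𝕜 := 𝕜), hs₁, hus₂, inner_s₁, RCLike.ofReal_re]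
    ring
  have quadratic : (c₁ + c₂) * (1 + r) * (1 + r) ≤ 2 * (1 + r) := by
    have := h (s₁ + u • s₂)
    rw [norm_inner_left, norm_inner_right, norm_sq] at this
    linarith
  have linear : (c₁ + c₂) * (1 + r) ≤ 2 := le_of_mul_le_mul_right quadratic (by positivity)
  refine le_of_mul_le_mul_right (a := 1 + r) ?_ (by positivity)
  calc r * (1 + r) ≤ 2 * r := by nlinarith
    _ ≤ ((1 - c₁) + (1 - c₂)) * (1 + r) := by linarith

lemma norm_inner_le_of_isPositive_of_add_le_one {T₁ T₂ : E →ₗ[𝕜] E} (hT₁ : T₁.IsPositive)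
    (hT₂ : T₂.IsPositive) (hT : T₁ + T₂ ≤ 1) {s₁ s₂ : E} (hs₁ : ‖s₁‖ = 1) (hs₂ : ‖s₂‖ = 1)
    {c₁ c₂ : ℝ} (hTs₁ : T₁ s₁ = (c₁ : 𝕜) • s₁) (hTs₂ : T₂ s₂ = (c₂ : 𝕜) • s₂) :
    ‖⟪s₁, s₂⟫_𝕜‖ ≤ (1 - c₁) + (1 - c₂) := by
  refine norm_inner_le_of_forall_mul_norm_inner_sq_add_le hs₁ hs₂ fun x => ?_
  calc c₁ * ‖⟪s₁, x⟫_𝕜‖ ^ 2 + c₂ * ‖⟪s₂, x⟫_𝕜‖ ^ 2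
      ≤ RCLike.re ⟪T₁ x, x⟫_𝕜 + RCLike.re ⟪T₂ x, x⟫_𝕜 := add_le_add
        (mul_norm_inner_sq_le_re_inner_of_isPositive hT₁ hs₁ hTs₁ x)
        (mul_norm_inner_sq_le_re_inner_of_isPositive hT₂ hs₂ hTs₂ x)
    _ ≤ ‖x‖ ^ 2 := by
        have := (LinearMap.le_def _ _ |>.mp hT).re_inner_nonneg_left x
        simp only [LinearMap.sub_apply, LinearMap.add_apply, Module.End.one_apply, inner_sub_left,
          inner_add_left, map_sub, map_add, inner_self_eq_norm_sq] at this
        linarith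

end PositiveOperators

section Matrices

variable {𝕜 n : Type*} [RCLike 𝕜]

lemma posSemidef_integral [Finite n] {α : Type*} [MeasurableSpace α] {μ : Measure α}
    {K : α → Matrix n n 𝕜} (hint : ∀ i j, Integrable (fun a => K a i j) μ)
    (hK : ∀ᵐ a ∂μ, (K a).PosSemidef) :
    (of fun i j => ∫ a, K a i j ∂μ).PosSemidef := by
  cases nonempty_fintype n
  refine .of_dotProduct_mulVec_nonneg ?_ fun x => ?_
  · ext i j
    rw [conjTranspose_apply, of_apply, of_apply, RCLike.star_def, ← integral_conj]
    exact integral_congr_ae (hK.mono fun a ha => ha.isHermitian.apply i j)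
  · have : star x ⬝ᵥ (of fun i j => ∫ a, K a i j ∂μ) *ᵥ x = ∫ a, star x ⬝ᵥ K a *ᵥ x ∂μ := by
      simp only [dotProduct, mulVec, of_apply]
      rw [integral_finsetSum _ fun i _ => .const_mul
        (integrable_finsetSum _ fun j _ => (hint i j).mul_const _) _]
      refine Finset.sum_congr rfl fun i _ => ?_
      rw [integral_const_mul, integral_finsetSum _ fun j _ => (hint i j).mul_const _]
      simp only [integral_mul_const]
    rw [this]
    exact integral_nonneg_of_ae (hK.mono fun a ha => ha.dotProduct_mulVec_nonneg x)

variable [Fintype n]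

lemma norm_toLp_eq_one_iff {x : n → 𝕜} : ‖WithLp.toLp 2 x‖ = 1 ↔ ∑ i, ‖x i‖ ^ 2 = 1 := by
  rw [EuclideanSpace.norm_eq, Real.sqrt_eq_one]

lemma inner_toLp_eq_sum (x y : n → 𝕜) :
    ⟪WithLp.toLp 2 x, WithLp.toLp 2 y⟫_𝕜 = ∑ i, starRingEnd 𝕜 (x i) * y i := by
  simp only [PiLp.inner_apply, RCLike.inner_apply, mul_comm]

lemma norm_sum_conj_mul_le_one {x y : n → 𝕜} (hx : ∑ i, ‖x i‖ ^ 2 = 1)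
    (hy : ∑ i, ‖y i‖ ^ 2 = 1) : ‖∑ i, starRingEnd 𝕜 (x i) * y i‖ ≤ 1 := by
  rw [← norm_toLp_eq_one_iff] at hx hy
  simpa [← inner_toLp_eq_sum, hx, hy] using
    norm_inner_le_norm (𝕜 := 𝕜) (WithLp.toLp 2 x) (WithLp.toLp 2 y)

lemma norm_sum_conj_mul_le_of_posSemidef [DecidableEq n] {A B : Matrix n n 𝕜}
    (hA : A.PosSemidef) (hB : B.PosSemidef) (hAB : (1 - (A + B)).PosSemidef) {x y : n → 𝕜}
    (hx : ∑ i, ‖x i‖ ^ 2 = 1) (hy : ∑ i, ‖y i‖ ^ 2 = 1) {a b : ℝ}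
    (hAx : A *ᵥ x = (a : 𝕜) • x) (hBy : B *ᵥ y = (b : 𝕜) • y) :
    ‖∑ i, starRingEnd 𝕜 (x i) * y i‖ ≤ (1 - a) + (1 - b) := by
  rw [← norm_toLp_eq_one_iff] at hx hy
  rw [← inner_toLp_eq_sum]
  have hle : A.toEuclideanLin + B.toEuclideanLin ≤ 1 := by
    rw [LinearMap.le_def, Module.End.one_eq_id, ← toLpLin_one, ← map_add, ← map_sub]
    exact isPositive_toEuclideanLin_iff.mpr hAB
  refine norm_inner_le_of_isPositive_of_add_le_one (isPositive_toEuclideanLin_iff.mpr hA)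
    (isPositive_toEuclideanLin_iff.mpr hB) hle hx hy ?_ ?_
  · rw [toLpLin_toLp, toLin'_apply, hAx, WithLp.toLp_smul]
  · rw [toLpLin_toLp, toLin'_apply, hBy, WithLp.toLp_smul]

end Matrices

section Prolate

variable {N : ℕ}

/-- The complex exponential of frequency `f` sampled at `0, …, N - 1`. The prolate matrix is the
integral over the window of the rank-one matrices `e_f e_f*` built from these vectors. -/
noncomputable def sampledExponential (N : ℕ) (f : ℝ) : Fin N → ℂ :=
  fun m => Complex.exp (2 * π * Complex.I * f * (m : ℕ))

lemma vecMulVec_sampledExponential_apply (f : ℝ) (m n : Fin N) :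
    vecMulVec (sampledExponential N f) (star (sampledExponential N f)) m n =
      Complex.exp (2 * π * Complex.I * f * ((m : ℕ) - (n : ℕ))) := by
  simp only [vecMulVec_apply, Pi.star_apply, sampledExponential, RCLike.star_def,
    ← Complex.exp_conj, ← Complex.exp_add]
  congr 1
  simp only [map_mul, Complex.conj_ofReal, Complex.conj_I, Complex.conj_ofNat, map_natCast]
  ring

lemma prolate1D_eq_integral_vecMulVec (𝕎 : Set ℝ) :
    prolate1D N 𝕎 = of fun m n => ∫ f in 𝕎,
      vecMulVec (sampledExponential N f) (star (sampledExponential N f)) m n := by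
  simp only [vecMulVec_sampledExponential_apply]
  rfl

lemma integrableOn_vecMulVec_sampledExponential {𝕎 : Set ℝ} (h𝕎 : volume 𝕎 ≠ ⊤) (m n : Fin N) :
    IntegrableOn (fun f =>
      vecMulVec (sampledExponential N f) (star (sampledExponential N f)) m n) 𝕎 := by
  simp only [vecMulVec_sampledExponential_apply]
  refine .of_bound h𝕎.lt_top (Continuous.aestronglyMeasurable (by fun_prop)) 1
    (.of_forall fun f => ?_)
  simp [Complex.norm_exp]

lemma posSemidef_prolate1D {𝕎 : Set ℝ} (h𝕎 : volume 𝕎 ≠ ⊤) : (prolate1D N 𝕎).PosSemidef := by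
  rw [prolate1D_eq_integral_vecMulVec]
  exact posSemidef_integral (integrableOn_vecMulVec_sampledExponential h𝕎)
    (.of_forall fun f => posSemidef_vecMulVec_self_star _)

lemma prolate1D_union {𝕎₁ 𝕎₂ : Set ℝ} (h : Disjoint 𝕎₁ 𝕎₂) (hmeas : MeasurableSet 𝕎₂)
    (h₁ : volume 𝕎₁ ≠ ⊤) (h₂ : volume 𝕎₂ ≠ ⊤) :
    prolate1D N (𝕎₁ ∪ 𝕎₂) = prolate1D N 𝕎₁ + prolate1D N 𝕎₂ := by
  ext m n
  simp only [prolate1D_eq_integral_vecMulVec, Matrix.add_apply, of_apply]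
  exact setIntegral_union h hmeas (integrableOn_vecMulVec_sampledExponential h₁ m n)
    (integrableOn_vecMulVec_sampledExponential h₂ m n)

lemma prolate1D_Icc_add_one (a : ℝ) : prolate1D N (Icc a (a + 1)) = 1 := by
  ext m n
  have : prolate1D N (Icc a (a + 1)) m n =
      fourierCoeff (fourier (m : ℤ) : AddCircle (1 : ℝ) → ℂ) (n : ℤ) := by
    rw [fourierCoeff_eq_intervalIntegral _ _ a, intervalIntegral.integral_of_le (by linarith),
      ← integral_Icc_eq_integral_Ioc, div_one, one_smul, prolate1D]
    refine integral_congr_ae (.of_forall fun f => ?_)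
    beta_reduce
    rw [smul_eq_mul, fourier_coe_apply, fourier_coe_apply, ← Complex.exp_add]
    congr 1
    push_cast
    ring
  rw [this, fourierCoeff_fourier, Pi.single_apply, Matrix.one_apply]
  simp [Fin.ext_iff, eq_comm]

lemma posSemidef_one_sub_prolate1D {𝕎 : Set ℝ} {a : ℝ} (h𝕎 : 𝕎 ⊆ Icc a (a + 1))
    (hmeas : MeasurableSet 𝕎) : (1 - prolate1D N 𝕎).PosSemidef := by
  have volume_ne_top {s : Set ℝ} (hs : s ⊆ Icc a (a + 1)) : volume s ≠ ⊤ :=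
    measure_ne_top_of_subset hs isCompact_Icc.measure_ne_top
  have hcompl : volume (Icc a (a + 1) \ 𝕎) ≠ ⊤ := volume_ne_top sdiff_subset
  rw [← prolate1D_Icc_add_one a, ← sdiff_union_of_subset h𝕎,
    prolate1D_union disjoint_sdiff_left hmeas hcompl (volume_ne_top h𝕎), add_sub_cancel_right]
  exact posSemidef_prolate1D hcompl

theorem dpss_eigenvector_near_orthogonality_general {𝕎₁ 𝕎₂ : Set ℝ} {a : ℝ}
    (h₁ : 𝕎₁ ⊆ Icc a (a + 1)) (h₂ : 𝕎₂ ⊆ Icc a (a + 1)) (hmeas₁ : MeasurableSet 𝕎₁)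
    (hmeas₂ : MeasurableSet 𝕎₂) (hdisj : Disjoint 𝕎₁ 𝕎₂) {s₁ s₂ : Fin N → ℂ}
    (hs₁ : ∑ i, ‖s₁ i‖ ^ 2 = 1) (hs₂ : ∑ i, ‖s₂ i‖ ^ 2 = 1) {c₁ c₂ : ℝ}
    (heig₁ : prolate1D N 𝕎₁ *ᵥ s₁ = (c₁ : ℂ) • s₁)
    (heig₂ : prolate1D N 𝕎₂ *ᵥ s₂ = (c₂ : ℂ) • s₂) :
    ‖∑ i, starRingEnd ℂ (s₁ i) * s₂ i‖ ≤ (1 - c₁) + (1 - c₂) := by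
  have hvol₁ : volume 𝕎₁ ≠ ⊤ := measure_ne_top_of_subset h₁ isCompact_Icc.measure_ne_top
  have hvol₂ : volume 𝕎₂ ≠ ⊤ := measure_ne_top_of_subset h₂ isCompact_Icc.measure_ne_top
  refine norm_sum_conj_mul_le_of_posSemidef (posSemidef_prolate1D hvol₁)
    (posSemidef_prolate1D hvol₂) ?_ hs₁ hs₂ heig₁ heig₂
  rw [← prolate1D_union hdisj hmeas₂ hvol₁ hvol₂]
  exact posSemidef_one_sub_prolate1D (union_subset h₁ h₂) (hmeas₁.union hmeas₂)

end Prolate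

lemma le_three_mul_sqrt_one_sub_min {r c₁ c₂ : ℝ} (h₀ : 0 ≤ r) (h₁ : r ≤ 1)
    (h : r ≤ (1 - c₁) + (1 - c₂)) : r ≤ 3 * √(1 - min c₁ c₂) := by
  have two_mul_bound : r ≤ 2 * (1 - min c₁ c₂) := by
    linarith [min_le_left c₁ c₂, min_le_right c₁ c₂]
  have sq_bound : (r / 3) ^ 2 ≤ 1 - min c₁ c₂ := calc
    (r / 3) ^ 2 ≤ r / 2 := by nlinarith
    _ ≤ 1 - min c₁ c₂ := by linarith
  linarith [Real.le_sqrt_of_sq_le sq_bound]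

theorem dpss_eigenvector_near_orthogonality
    (f₁ f₂ W₁ W₂ : ℝ) (hW₁ : W₁ ∈ Set.Ioo (0 : ℝ) (1 / 2)) (hW₂ : W₂ ∈ Set.Ioo (0 : ℝ) (1 / 2))
    (hsub₁ : Set.Icc (f₁ - W₁) (f₁ + W₁) ⊆ Set.Icc (-(1 / 2) : ℝ) (1 / 2))
    (hsub₂ : Set.Icc (f₂ - W₂) (f₂ + W₂) ⊆ Set.Icc (-(1 / 2) : ℝ) (1 / 2))
    (hdisj : Disjoint (Set.Icc (f₁ - W₁) (f₁ + W₁)) (Set.Icc (f₂ - W₂) (f₂ + W₂)))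
    (ε : ℝ) (hε : ε ∈ Set.Ioo (0 : ℝ) 1) :
    ∃ Ntil₁ : ℕ, 1 ≤ Ntil₁ ∧
      ∀ (N : ℕ), Ntil₁ ≤ N →
        ∀ (hA₁ : (prolate1D N (Set.Icc (f₁ - W₁) (f₁ + W₁))).IsHermitian)
          (hA₂ : (prolate1D N (Set.Icc (f₂ - W₂) (f₂ + W₂))).IsHermitian)
          (ν₁ ν₂ : Fin N → ℝ), Antitone ν₁ → Antitone ν₂ →
          (∃ σ : Equiv.Perm (Fin N), hA₁.eigenvalues = ν₁ ∘ σ) →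
          (∃ σ : Equiv.Perm (Fin N), hA₂.eigenvalues = ν₂ ∘ σ) →
          ∀ (l₁ l₂ : Fin N),
            (l₁ : ℕ) + 1 ≤ ⌊2 * (N : ℝ) * W₁ * (1 - ε)⌋₊ →
            (l₂ : ℕ) + 1 ≤ ⌊2 * (N : ℝ) * W₂ * (1 - ε)⌋₊ →
            ∀ (s₁ s₂ : Fin N → ℂ),
              (∑ i, ‖s₁ i‖ ^ 2 = 1) → (∑ i, ‖s₂ i‖ ^ 2 = 1) →
              (prolate1D N (Set.Icc (f₁ - W₁) (f₁ + W₁))).mulVec s₁ = (ν₁ l₁ : ℂ) • s₁ →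
              (prolate1D N (Set.Icc (f₂ - W₂) (f₂ + W₂))).mulVec s₂ = (ν₂ l₂ : ℂ) • s₂ →
              ‖∑ i, (starRingEnd ℂ) (s₁ i) * s₂ i‖ ≤
                3 * Real.sqrt (1 - min (ν₁ l₁) (ν₂ l₂)) := by
  refine ⟨1, le_rfl, fun N _ _ _ ν₁ ν₂ _ _ _ _ l₁ l₂ _ _ s₁ s₂ hs₁ hs₂ heig₁ heig₂ => ?_⟩
  have hperiod : Icc (-(1 / 2) : ℝ) (1 / 2) ⊆ Icc (-(1 / 2)) (-(1 / 2) + 1) :=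
    Icc_subset_Icc_right (by norm_num)
  exact le_three_mul_sqrt_one_sub_min (norm_nonneg _) (norm_sum_conj_mul_le_one hs₁ hs₂)
    (dpss_eigenvector_near_orthogonality_general (hsub₁.trans hperiod) (hsub₂.trans hperiod)
      measurableSet_Icc measurableSet_Icc hdisj hs₁ hs₂ heig₁ heig₂)
end
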